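/- arXiv:2102.00803 — 8 statements merged into one kernel-verified Lean document; each statement's English description precedes it below -/
import Mathlib

section
/- Let F ⊆ ℤ² be a finite nonempty set and let ℓ be a line through the origin of ℝ² with ℓ ∉ dir(F). Then there exists v ∈ ℤ² such that F ∩ (v + F) = ∅ and ℓ ∉ dir(F ∪ (v + F)). -/
/-!
Since `ℓ ∉ dir(F)`, some translate `a + ℓ` meets `F` in exactly one point `s₀`. It suffices to find
`v` such that no point of `v + F` lies on a common translate of `ℓ` with a point of `F`: then
`v + F` is disjoint from `F`, and `a + ℓ` still meets `F ∪ (v + F)` only in `s₀`. Such a `v` must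
avoid the finitely many translates of `ℓ` through the differences of points of `F`
(`exists_shift`), which all but finitely many multiples of a lattice vector off `ℓ` do.
-/

noncomputable section

/-- The embedding of the integer lattice into the plane. -/
def toR (p : ℤ × ℤ) : ℝ × ℝ := ((p.1 : ℝ), (p.2 : ℝ))

/-- A line through the origin of `ℝ²`: the span of a nonzero vector. -/
def IsLine (ℓ : Submodule ℝ (ℝ × ℝ)) : Prop :=
  ∃ w : ℝ × ℝ, w ≠ 0 ∧ ℓ = Submodule.span ℝ {w}

/-- The direction set of `S ⊆ ℤ²`: lines `ℓ` through the origin such that every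
translate of `ℓ` that meets `S` meets it in at least two points. -/
def dirSet (S : Set (ℤ × ℤ)) : Set (Submodule ℝ (ℝ × ℝ)) :=
  {ℓ | IsLine ℓ ∧ ∀ a : ℝ × ℝ, (∃ s ∈ S, toR s - a ∈ ℓ) →
      ∃ s ∈ S, ∃ t ∈ S, s ≠ t ∧ toR s - a ∈ ℓ ∧ toR t - a ∈ ℓ}

/-- A line misses one of the two standard lattice vectors. -/
lemma exists_toR_notMem (ℓ : Submodule ℝ (ℝ × ℝ)) (hℓ : IsLine ℓ) : ∃ u : ℤ × ℤ, toR u ∉ ℓ := by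
  obtain ⟨w, -, rfl⟩ := hℓ
  by_contra! hall
  obtain ⟨a, ha⟩ := Submodule.mem_span_singleton.1 (hall (1, 0))
  obtain ⟨b, hb⟩ := Submodule.mem_span_singleton.1 (hall (0, 1))
  simp only [toR, Prod.ext_iff, Prod.smul_fst, Prod.smul_snd, smul_eq_mul, Int.cast_one,
    Int.cast_zero] at ha hb
  -- `a * w = (1, 0)` and `b * w = (0, 1)` force `1 = (a * w.1) * (b * w.2) = (a * w.2) * (b * w.1) = 0`
  have h1 : (a * w.1) * (b * w.2) = (a * w.2) * (b * w.1) := by ring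
  rw [ha.1, ha.2, hb.1, hb.2] at h1
  norm_num at h1

lemma toR_add (p q : ℤ × ℤ) : toR (p + q) = toR p + toR q := by
  simp [toR]

lemma toR_zsmul (n : ℤ) (p : ℤ × ℤ) : toR (n • p) = (n : ℝ) • toR p := by
  simp [toR]

/-- Among the multiples of a lattice vector off `ℓ`, distinct ones lie on distinct translates of
`ℓ`, so only finitely many lie on a translate through a difference of two points of `F`. -/
lemma exists_shift (F : Set (ℤ × ℤ)) (hfin : F.Finite) (ℓ : Submodule ℝ (ℝ × ℝ))
    (hℓ : IsLine ℓ) :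
    ∃ v : ℤ × ℤ, ∀ f ∈ F, ∀ g ∈ F, toR (v + g) - toR f ∉ ℓ := by
  obtain ⟨u, hu⟩ := exists_toR_notMem ℓ hℓ
  have hinj : Function.Injective fun n : ℤ => ℓ.mkQ (toR (n • u)) := by
    intro m n hmn
    by_contra hne
    have hmem : toR (m • u) - toR (n • u) ∈ ℓ := (Submodule.Quotient.eq ℓ).1 hmn
    rw [toR_zsmul, toR_zsmul, ← sub_smul] at hmem
    have hc : (m : ℝ) - n ≠ 0 := sub_ne_zero.2 (by exact_mod_cast hne)
    exact hu ((ℓ.smul_mem_iff hc).1 hmem)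
  have hbad := ((hfin.prod hfin).image fun p => ℓ.mkQ (toR p.1 - toR p.2)).preimage hinj.injOn
  obtain ⟨n, hn⟩ := hbad.exists_notMem
  refine ⟨n • u, fun f hf g hg hmem => hn ⟨(f, g), ⟨hf, hg⟩, Eq.symm ?_⟩⟩
  refine (Submodule.Quotient.eq ℓ).2 ?_
  rw [toR_add] at hmem
  convert hmem using 1
  abel

/-- If `F ⊆ ℤ²` is finite and nonempty and `ℓ` is a line through the
origin with `ℓ ∉ dir(F)`, then there is `v ∈ ℤ²` with `F ∩ (v + F) = ∅` and
`ℓ ∉ dir(F ∪ (v + F))`. -/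
theorem stmt2 (F : Set (ℤ × ℤ)) (hfin : F.Finite) (hne : F.Nonempty)
    (ℓ : Submodule ℝ (ℝ × ℝ)) (hℓ : IsLine ℓ) (h : ℓ ∉ dirSet F) :
    ∃ v : ℤ × ℤ, F ∩ ((fun a => v + a) '' F) = ∅ ∧
      ℓ ∉ dirSet (F ∪ (fun a => v + a) '' F) := by
  obtain ⟨v, hv⟩ := exists_shift F hfin ℓ hℓ
  refine ⟨v, ?_, fun hdir => h ⟨hℓ, fun a ⟨s₀, hs₀, ha⟩ => ?_⟩⟩
  · refine Set.eq_empty_iff_forall_notMem.2 ?_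
    rintro _ ⟨hf, g, hg, rfl⟩
    exact hv (v + g) hf g hg (by simp)
  · -- points of the union on `a + ℓ`, a translate through `s₀ ∈ F`, cannot come from `v + F`
    have key : ∀ s ∈ F ∪ (fun a => v + a) '' F, toR s - a ∈ ℓ → s ∈ F := by
      rintro s (hs | ⟨g, hg, rfl⟩) hmem
      · exact hs
      · refine absurd ?_ (hv s₀ hs₀ g hg)
        simpa using ℓ.sub_mem hmem ha
    obtain ⟨s, hs, t, ht, hst, hsa, hta⟩ := hdir.2 a ⟨s₀, Or.inl hs₀, ha⟩
    exact ⟨s, key s hs hsa, t, key t ht hta, hst, hsa, hta⟩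
end
end

section
/- Let F ⊆ ℤ² be an exact cluster whose direction set dir(F) contains at most one line. Then every F-tiling T is 1-periodic, i.e., there exists a nonzero g ∈ ℤ² with T + g = T. -/
/-!
Let `c` be the indicator function of the tiling `T`. The Laurent polynomial ring
`R = ℤ[ℤ²]` acts on functions `ℤ² → ℤ` by translations, and the tiling condition says that
`∑_{f ∈ F} X^f` maps `c` to the constant function `1`. Write `d v = 1 - X^v`; the goal is a
nonzero `g` with `d g • c = 0`.

* Dilation (`dilate`): if `p` is a prime larger than `|F|`, the Frobenius congruence
  `(∑ X^f)^p ≡ ∑ X^{pf} (mod p)` shows that `∑ X^{pf}` maps `c` to a function that is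
  congruent to `1` mod `p` and has values in `[0, |F|]`, hence is constantly `1`. Consequently
  `∑ X^{nf}` maps `c` to `1` for all `n = 1 + qk` with `q = |F|!`.
* Elimination (`eliminate`, `special_annihilator`): for `f₀ ∈ F` and any `u`, a
  Vandermonde-type elimination among these relations shows that
  `d u * ∏_{f ≠ f₀} d (q (f - f₀))` annihilates `c`.
* Boundedness (`ann_of_sq`): since `c` is bounded, `d w ^ 2 * P` annihilates `c` only if
  `d w * P` does.
* Directions (`exists_direction`): as `dir(F)` has at most one line, there is a nonzero
  `u ∈ ℤ²` such that every `v ∈ ℤ²` not parallel to `u` admits `f₁ ∈ F` with no `f - f₁`,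
  `f ≠ f₁`, parallel to `v`.
* Replacement (`replace_factor`, `replace_all`): if `d v * P` annihilates `c` with `v` not
  parallel to `u`, then `P • c` is `v`-periodic and is also annihilated by a product of `d w`
  with all `w` transversal to `v` (elimination at `f₁`); modulo `d v` some power of `d (M u)`
  is a multiple of that product, so `d (M u) * P` annihilates `c` for some `M ≠ 0`. In this
  way every factor of an annihilator from the elimination step is traded for a factor
  `d (M u)`, and boundedness collapses the product of these into a single one.
-/

noncomputable section

/-- `T` is a tiling of `ℤ²` by translates of the cluster `F`. -/
def IsTiling (F : Finset (ℤ × ℤ)) (T : Set (ℤ × ℤ)) : Prop :=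
  ∀ p : ℤ × ℤ, ∃! tv : (ℤ × ℤ) × (ℤ × ℤ), tv.1 ∈ T ∧ tv.2 ∈ F ∧ p = tv.1 + tv.2

/-! ### The translation action -/

/-- The ring `ℤ[ℤ²]` of Laurent polynomials in two variables. -/
abbrev LPoly := AddMonoidAlgebra ℤ (ℤ × ℤ)

/-- The monomial `X^v`. -/
def mono (v : ℤ × ℤ) : LPoly := AddMonoidAlgebra.single v 1

lemma mono_add (v w : ℤ × ℤ) : mono (v + w) = mono v * mono w := by
  simp [mono, AddMonoidAlgebra.single_mul_single]

lemma mono_zero : mono 0 = 1 := rfl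

lemma mono_nsmul (n : ℕ) (v : ℤ × ℤ) : mono (n • v) = mono v ^ n := by
  induction n with
  | zero => simp [mono_zero]
  | succ n ih => rw [succ_nsmul, mono_add, ih, pow_succ]

/-- The action of `ℤ[ℤ²]` on functions `ℤ² → ℤ`, in which `X^v` acts by translating the graph
of a function by `v`, that is `(X^v • c) x = c (x - v)`. -/
def act : LPoly →ₐ[ℤ] Module.End ℤ (ℤ × ℤ → ℤ) :=
  AddMonoidAlgebra.lift ℤ (Module.End ℤ (ℤ × ℤ → ℤ)) (ℤ × ℤ)
    { toFun := fun v => LinearMap.funLeft ℤ ℤ (fun x => x - v.toAdd)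
      map_one' := by ext; simp [LinearMap.funLeft]
      map_mul' := by
        intro v w
        ext c x
        simp only [toAdd_mul, LinearMap.funLeft_apply, Module.End.mul_apply]
        congr 1
        abel }

lemma act_mono (v : ℤ × ℤ) (c : ℤ × ℤ → ℤ) (x : ℤ × ℤ) : act (mono v) c x = c (x - v) := by
  simp [act, mono, LinearMap.funLeft_apply]

/-- The annihilator of the function `c` in `ℤ[ℤ²]`. -/
def ann (c : ℤ × ℤ → ℤ) : Ideal LPoly where
  carrier := {P | act P c = 0}
  add_mem' := by
    intro P Q hP hQ
    simp only [Set.mem_ofPred_eq] at *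
    simp [hP, hQ]
  zero_mem' := by simp
  smul_mem' := by
    intro P Q hQ
    simp only [Set.mem_ofPred_eq] at *
    simp [hQ]

lemma mem_ann {c : ℤ × ℤ → ℤ} {P : LPoly} : P ∈ ann c ↔ act P c = 0 := Iff.rfl

/-! ### The difference polynomials -/

/-- The difference polynomial `1 - X^v`. A function is `v`-periodic iff `d v` annihilates it. -/
def d (v : ℤ × ℤ) : LPoly := 1 - mono v

lemma act_d (v : ℤ × ℤ) (c : ℤ × ℤ → ℤ) (x : ℤ × ℤ) : act (d v) c x = c x - c (x - v) := by
  simp [d, act_mono]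

lemma d_add (v w : ℤ × ℤ) : d (v + w) = d v + mono v * d w := by
  simp only [d, mono_add]; ring

lemma d_zero : d 0 = 0 := by simp [d, mono_zero]

lemma d_dvd_smul (k : ℤ) (v : ℤ × ℤ) : d v ∣ d (k • v) := by
  induction k using Int.induction_on with
  | zero => simp [d_zero]
  | succ n ih =>
    rw [add_smul, one_smul, add_comm, d_add]
    exact dvd_add dvd_rfl (ih.mul_left _)
  | pred n ih =>
    have h : d ((-(n : ℤ)) • v)
        = d ((-(n : ℤ) - 1) • v) + mono ((-(n : ℤ) - 1) • v) * d v := by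
      rw [← d_add]; congr 1; rw [sub_smul, one_smul]; abel
    rw [h] at ih
    exact (dvd_add_left (dvd_mul_left _ _)).1 ih

/-! ### Boundedness -/

/-- Translates and integer combinations of a bounded function are bounded. -/
lemma act_bounded {c : ℤ × ℤ → ℤ} (hc : ∃ B, ∀ x, |c x| ≤ B) (P : LPoly) :
    ∃ B, ∀ x, |act P c x| ≤ B := by
  induction P using AddMonoidAlgebra.induction_on with
  | of v =>
    obtain ⟨B, hB⟩ := hc
    refine ⟨B, fun x => ?_⟩
    have := act_mono v c x
    simp only [mono] at this
    simp only [AddMonoidAlgebra.of_apply, toAdd_ofAdd]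
    rw [this]
    exact hB _
  | add P Q hP hQ =>
    obtain ⟨B, hB⟩ := hP
    obtain ⟨C, hC⟩ := hQ
    refine ⟨B + C, fun x => ?_⟩
    rw [map_add]
    exact (abs_add_le _ _).trans (add_le_add (hB x) (hC x))
  | smul r P hP =>
    obtain ⟨B, hB⟩ := hP
    refine ⟨|r| * B, fun x => ?_⟩
    rw [map_smul]
    simp only [LinearMap.smul_apply, Pi.smul_apply, smul_eq_mul, abs_mul]
    exact mul_le_mul_of_nonneg_left (hB x) (abs_nonneg r)

/-- A bounded function which is affine along every coset of `ℤ w` is `w`-periodic. -/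
lemma ann_of_sq {c : ℤ × ℤ → ℤ} (hc : ∃ B, ∀ x, |c x| ≤ B) {w : ℤ × ℤ} {P : LPoly}
    (h : d w * (d w * P) ∈ ann c) : d w * P ∈ ann c := by
  obtain ⟨B, hB⟩ := act_bounded hc P
  rw [mem_ann] at *
  simp only [map_mul, Module.End.mul_apply] at *
  set ψ := act P c
  set δ := act (d w) ψ with hδ
  have h1 : ∀ x, δ (x - w) = δ x := fun x => by
    have := congrFun h x
    rw [act_d] at this
    simp only [Pi.zero_apply] at this
    linarith
  have h2 : ∀ (n : ℕ) x, δ (x - n • w) = δ x := by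
    intro n
    induction n with
    | zero => simp
    | succ n ih => intro x; rw [succ_nsmul, ← sub_sub, h1, ih]
  have h3 : ∀ (n : ℕ) x, ψ (x - n • w) = ψ x - n * δ x := by
    intro n x
    induction n with
    | zero => simp
    | succ n ih =>
      have h4 := h2 n x
      rw [hδ, act_d, ← hδ, sub_sub, ← succ_nsmul, ih] at h4
      push_cast
      linarith
  funext x
  by_contra hne
  have hne : δ x ≠ 0 := hne
  have hpos : 1 ≤ |δ x| := Int.one_le_abs hne
  have hB0 : 0 ≤ B := (abs_nonneg _).trans (hB x)
  -- `2 B + 1` steps in direction `w` leave the interval `[-B, B]`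
  have h5 := h3 (2 * B + 1).toNat x
  have h6 : (((2 * B + 1).toNat : ℕ) : ℤ) = 2 * B + 1 := Int.toNat_of_nonneg (by omega)
  rw [h6] at h5
  have h7 : |(2 * B + 1) * δ x| ≤ 2 * B := by
    have : (2 * B + 1) * δ x = ψ x - ψ (x - (2 * B + 1).toNat • w) := by linarith
    rw [this]
    have := abs_sub (ψ x) (ψ (x - (2 * B + 1).toNat • w))
    linarith [hB x, hB (x - (2 * B + 1).toNat • w)]
  rw [abs_mul, abs_of_nonneg (by omega : 0 ≤ 2 * B + 1)] at h7
  nlinarith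

lemma ann_of_pow {c : ℤ × ℤ → ℤ} (hc : ∃ B, ∀ x, |c x| ≤ B) {w : ℤ × ℤ} {P : LPoly} (n : ℕ)
    (h : d w ^ n * P ∈ ann c) : d w * P ∈ ann c := by
  induction n with
  | zero => exact (ann c).mul_mem_left _ (by simpa using h)
  | succ n ih =>
    cases n with
    | zero => simpa using h
    | succ n =>
      apply ih
      have : d w ^ (n + 1) * P = d w * (d w ^ n * P) := by ring
      rw [this]
      apply ann_of_sq hc
      have : d w * (d w * (d w ^ n * P)) = d w ^ (n + 1 + 1) * P := by ring
      rwa [this]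

lemma ann_combine {c : ℤ × ℤ → ℤ} (hc : ∃ B, ∀ x, |c x| ≤ B) {u : ℤ × ℤ} {M N : ℤ} {P : LPoly}
    (h : d (M • u) * (d (N • u) * P) ∈ ann c) : d ((M * N) • u) * P ∈ ann c := by
  apply ann_of_sq hc
  obtain ⟨A, hA⟩ := d_dvd_smul N (M • u)
  obtain ⟨C, hC⟩ := d_dvd_smul M (N • u)
  rw [smul_smul, mul_comm] at hA
  rw [smul_smul] at hC
  have : d ((M * N) • u) * (d ((M * N) • u) * P)
      = A * C * (d (M • u) * (d (N • u) * P)) := by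
    nth_rewrite 1 [hA]
    rw [hC]; ring
  rw [this]
  exact (ann c).mul_mem_left _ h

/-! ### Dilation of the cluster -/

lemma sum_pow_prime {R ι : Type*} [CommRing R] {p : ℕ} (hp : p.Prime) (s : Finset ι)
    (a : ι → R) : ∃ r, (∑ i ∈ s, a i) ^ p = ∑ i ∈ s, a i ^ p + p * r := by
  classical
  induction s using Finset.induction_on with
  | empty => exact ⟨0, by simp [hp.ne_zero]⟩
  | insert i s hi ih =>
    obtain ⟨r, hr⟩ := ih
    obtain ⟨t, ht⟩ := exists_add_pow_prime_eq hp (a i) (∑ i ∈ s, a i)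
    refine ⟨r + a i * (∑ i ∈ s, a i) * t, ?_⟩
    rw [Finset.sum_insert hi, Finset.sum_insert hi, ht, hr]
    ring

lemma act_sum_mono {ι : Type*} (s : Finset ι) (v : ι → ℤ × ℤ) (c : ℤ × ℤ → ℤ) (x : ℤ × ℤ) :
    act (∑ i ∈ s, mono (v i)) c x = ∑ i ∈ s, c (x - v i) := by
  simp [map_sum, LinearMap.sum_apply, Finset.sum_apply, act_mono]

/-- Dilating the cluster by a prime larger than its size preserves the tiling. -/
lemma dilate {ι : Type*} (s : Finset ι) (hs : s.Nonempty) (v : ι → ℤ × ℤ) (c : ℤ × ℤ → ℤ)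
    (hc : ∀ x, c x = 0 ∨ c x = 1) (h : ∀ x, ∑ i ∈ s, c (x - v i) = 1)
    {p : ℕ} (hp : p.Prime) (hps : s.card < p) (x : ℤ × ℤ) :
    ∑ i ∈ s, c (x - p • v i) = 1 := by
  obtain ⟨r, hr⟩ := sum_pow_prime hp s (fun i => mono (v i))
  have h1 : act (∑ i ∈ s, mono (v i)) c = fun _ => 1 := by
    funext x; rw [act_sum_mono, h]
  have h2 : ∀ n : ℕ, act ((∑ i ∈ s, mono (v i)) ^ (n + 1)) c = fun _ => (s.card : ℤ) ^ n := by
    intro n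
    induction n with
    | zero => simpa using h1
    | succ n ih =>
      rw [pow_succ', map_mul, Module.End.mul_apply, ih]
      funext x
      rw [act_sum_mono, Finset.sum_const, nsmul_eq_mul, pow_succ']
  have h3 := congrFun (h2 (p - 1)) x
  rw [Nat.sub_add_cancel hp.one_le, hr] at h3
  simp only [← mono_nsmul, map_add, LinearMap.add_apply, Pi.add_apply, map_mul, map_natCast,
    Module.End.mul_apply] at h3
  rw [act_sum_mono, Module.End.natCast_apply, Pi.smul_apply, nsmul_eq_mul] at h3
  have h4 : (p : ℤ) ∣ (s.card : ℤ) ^ (p - 1) - 1 := by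
    apply (Int.modEq_iff_dvd).1
    apply Int.ModEq.symm
    apply Int.ModEq.pow_card_sub_one_eq_one hp
    rw [Nat.isCoprime_iff_coprime]
    exact Nat.Coprime.symm (Nat.coprime_of_lt_prime hs.card_pos.ne' hps hp)
  have h5 : 0 ≤ ∑ i ∈ s, c (x - p • v i) :=
    Finset.sum_nonneg fun i _ => by rcases hc (x - p • v i) with h | h <;> rw [h] <;> norm_num
  have h6 : ∑ i ∈ s, c (x - p • v i) ≤ s.card := by
    have := Finset.sum_le_card_nsmul s (fun i => c (x - p • v i)) 1
      (fun i _ => by rcases hc (x - p • v i) with h | h <;> simp only [h, zero_le_one, le_refl])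
    simpa using this
  have h7 : (p : ℤ) ∣ ∑ i ∈ s, c (x - p • v i) - 1 := by
    have : ∑ i ∈ s, c (x - p • v i) - 1
        = ((s.card : ℤ) ^ (p - 1) - 1) - p * act r c x := by linarith
    rw [this]
    exact dvd_sub h4 (dvd_mul_right _ _)
  have h8 := hs.card_pos
  have h9 := Int.eq_zero_of_abs_lt_dvd h7 (by rw [abs_lt]; constructor <;> omega)
  omega

/-- Dilating the cluster by a number all of whose prime factors exceed its size preserves the
tiling. -/
lemma dilate_of_primes {ι : Type*} (s : Finset ι) (hs : s.Nonempty) (v : ι → ℤ × ℤ)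
    (c : ℤ × ℤ → ℤ) (hc : ∀ x, c x = 0 ∨ c x = 1) (h : ∀ x, ∑ i ∈ s, c (x - v i) = 1)
    (n : ℕ) (hn0 : n ≠ 0) (hn : ∀ p, p.Prime → p ∣ n → s.card < p) (x : ℤ × ℤ) :
    ∑ i ∈ s, c (x - n • v i) = 1 := by
  induction n using induction_on_primes generalizing x with
  | zero => exact absurd rfl hn0
  | one => simpa using h x
  | prime_mul p n hp ih =>
    have ih' := ih (right_ne_zero_of_mul hn0) (fun q hq hqn => hn q hq (hqn.mul_left p))
    have := dilate s hs (fun i => n • v i) c hc ih' hp (hn p hp (dvd_mul_right _ _)) x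
    simpa [mul_smul] using this

/-! ### Elimination -/

/-- Elimination in a system of power-sum relations `a₀ e₀^k + ∑ a_i e_i^k ∈ I`: passing to
`(relation k+1) - e_i * (relation k)` removes the `i`-th summand. -/
lemma eliminate {R ι : Type*} [CommRing R] (I : Ideal R) (s : Finset ι) (e : ι → R) (e₀ : R) :
    ∀ (a : ι → R) (a₀ : R), (∀ k : ℕ, a₀ * e₀ ^ k + ∑ i ∈ s, a i * e i ^ k ∈ I) →
      a₀ * ∏ i ∈ s, (e₀ - e i) ∈ I := by
  classical
  induction s using Finset.induction_on with
  | empty => intro a a₀ h; simpa using h 0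
  | insert i s hi ih =>
    intro a a₀ h
    rw [Finset.prod_insert hi, ← mul_assoc]
    apply ih (fun j => a j * (e j - e i))
    intro k
    have h1 := I.sub_mem (h (k + 1)) (I.mul_mem_left (e i) (h k))
    have h2 : a₀ * e₀ ^ (k + 1) + ∑ j ∈ insert i s, a j * e j ^ (k + 1)
        - e i * (a₀ * e₀ ^ k + ∑ j ∈ insert i s, a j * e j ^ k)
        = a₀ * (e₀ - e i) * e₀ ^ k + ∑ j ∈ s, a j * (e j - e i) * e j ^ k := by
      rw [Finset.sum_insert hi, Finset.sum_insert hi]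
      have h3 : ∑ j ∈ s, a j * (e j - e i) * e j ^ k
          = ∑ j ∈ s, a j * e j ^ (k + 1) - e i * ∑ j ∈ s, a j * e j ^ k := by
        rw [Finset.mul_sum, ← Finset.sum_sub_distrib]
        exact Finset.sum_congr rfl fun j _ => by ring
      rw [h3]; ring
    rwa [h2] at h1

/-- The annihilator of a tiling attached to a base point `f₀` of the cluster. The factor `d u`
makes up for the right-hand side `1` of the tiling equation. -/
lemma special_annihilator (F : Finset (ℤ × ℤ)) (c : ℤ × ℤ → ℤ)
    (hc : ∀ x, c x = 0 ∨ c x = 1) (h : ∀ x, ∑ f ∈ F, c (x - f) = 1) (u f₀ : ℤ × ℤ)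
    (hf₀ : f₀ ∈ F) :
    d u * ∏ f ∈ F.erase f₀, d (F.card.factorial • (f - f₀)) ∈ ann c := by
  set q := F.card.factorial with hq
  have hdil : ∀ (k : ℕ) x, ∑ f ∈ F, c (x - (1 + q * k) • f) = 1 := by
    intro k x
    apply dilate_of_primes F ⟨f₀, hf₀⟩ (fun f => f) c hc h
    · omega
    · intro p hp hpn
      by_contra hle
      have h1 : p ∣ q * k := ((Nat.Prime.dvd_factorial hp).2 (not_lt.1 hle)).mul_right k
      exact hp.one_lt.ne' (Nat.dvd_one.1 ((Nat.dvd_add_left h1).1 hpn))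
  have key := eliminate (ann c) (F.erase f₀) (fun f => mono (q • (f - f₀))) 1
    (fun f => d u * mono (f - f₀)) (d u) (by
      intro k
      have h1 : d u * ∑ f ∈ F, mono ((1 + q * k) • f) ∈ ann c := by
        rw [mem_ann, map_mul, Module.End.mul_apply]
        funext x
        rw [act_d, act_sum_mono, act_sum_mono, hdil, hdil]
        rfl
      have h2 := (ann c).mul_mem_left (mono (-((1 + q * k) • f₀))) h1
      have h3 : mono (-((1 + q * k) • f₀)) * (d u * ∑ f ∈ F, mono ((1 + q * k) • f))
          = d u * 1 ^ k
            + ∑ f ∈ F.erase f₀, d u * mono (f - f₀) * mono (q • (f - f₀)) ^ k := by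
        have h4 : ∀ f, d u * mono (f - f₀) * mono (q • (f - f₀)) ^ k
            = mono (-((1 + q * k) • f₀)) * (d u * mono ((1 + q * k) • f)) := by
          intro f
          rw [← mono_nsmul, mul_assoc, ← mono_add, mul_left_comm, ← mono_add]
          congr 2
          rw [smul_smul, mul_comm k q, ← succ_nsmul', neg_add_eq_sub, ← smul_sub, add_comm 1]
        rw [← Finset.add_sum_erase F _ hf₀, mul_add, mul_add, Finset.mul_sum, Finset.mul_sum]
        congr 1
        · rw [← h4]; simp [mono_zero]
        · exact Finset.sum_congr rfl fun f _ => (h4 f).symm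
      rwa [h3] at h2)
  exact key

/-! ### Trading factors for factors in one direction -/

/-- The determinant of two integer vectors. -/
def det2 (v w : ℤ × ℤ) : ℤ := v.1 * w.2 - v.2 * w.1

/-- If all `w i` are transversal to `v`, then `P • c`, being `v`-periodic and annihilated by the
product of the `d (w i)`, is periodic under some nonzero multiple of any given `u`. -/
lemma replace_factor {ι : Type*} {c : ℤ × ℤ → ℤ} (hc : ∃ B, ∀ x, |c x| ≤ B) {P : LPoly}
    {u v : ℤ × ℤ} (s : Finset ι) (w : ι → ℤ × ℤ)
    (hw : ∀ i ∈ s, det2 (w i) v ≠ 0) (hv : d v * P ∈ ann c)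
    (hs : ∏ i ∈ s, d (w i) ∈ ann c) : ∃ M : ℤ, M ≠ 0 ∧ d (M • u) * P ∈ ann c := by
  classical
  set M := ∏ i ∈ s, det2 (w i) v with hM
  refine ⟨M, Finset.prod_ne_zero_iff.2 hw, ?_⟩
  have h1 : ∀ i ∈ s, ∃ A B, d (M • u) = A * d v + B * d (w i) := by
    intro i hi
    obtain ⟨N, hN⟩ : det2 (w i) v ∣ M := Finset.dvd_prod_of_mem (fun i => det2 (w i) v) hi
    -- the linear relation between three vectors of the plane
    have h2 : M • u = (N * det2 u v) • w i + (N * det2 (w i) u) • v := by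
      rw [hN]
      ext <;> simp [det2] <;> ring
    obtain ⟨A, hA⟩ := d_dvd_smul (N * det2 u v) (w i)
    obtain ⟨B, hB⟩ := d_dvd_smul (N * det2 (w i) u) v
    rw [h2, d_add, hA, hB]
    exact ⟨mono ((N * det2 u v) • w i) * B, A, by ring⟩
  have h2 : ∀ t ⊆ s, ∃ A B, d (M • u) ^ t.card = A * d v + B * ∏ i ∈ t, d (w i) := by
    intro t
    induction t using Finset.induction_on with
    | empty => intro _; exact ⟨0, 1, by simp⟩
    | insert i t hi ih =>
      intro hts
      obtain ⟨A, B, hAB⟩ := ih ((Finset.subset_insert i t).trans hts)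
      obtain ⟨A', B', hAB'⟩ := h1 i (hts (Finset.mem_insert_self i t))
      refine ⟨d (M • u) ^ t.card * A' + A * B' * d (w i), B * B', ?_⟩
      rw [Finset.card_insert_of_notMem hi, Finset.prod_insert hi, pow_succ]
      nth_rewrite 2 [hAB']
      rw [mul_add, ← mul_assoc, ← mul_assoc]
      nth_rewrite 2 [hAB]
      ring
  obtain ⟨A, B, hAB⟩ := h2 s subset_rfl
  apply ann_of_pow hc s.card
  have h3 : d (M • u) ^ s.card * P = A * (d v * P) + B * P * ∏ i ∈ s, d (w i) := by
    rw [hAB]; ring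
  rw [h3]
  exact (ann c).add_mem ((ann c).mul_mem_left _ hv) ((ann c).mul_mem_left _ hs)

/-- Given, for every direction `v` transversal to `u`, an annihilator with all factors
transversal to `v`, every product of difference polynomials can be traded for one `d (M u)`. -/
lemma replace_all {ι : Type*} {c : ℤ × ℤ → ℤ} (hc : ∃ B, ∀ x, |c x| ≤ B) {u : ℤ × ℤ}
    (hann : ∀ v, det2 u v ≠ 0 → ∃ (s : Finset (ℤ × ℤ)) (w : ℤ × ℤ → ℤ × ℤ),
      (∀ i ∈ s, det2 (w i) v ≠ 0) ∧ d u * ∏ i ∈ s, d (w i) ∈ ann c)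
    (s : Finset ι) (v : ι → ℤ × ℤ) (hv : ∀ i ∈ s, v i ≠ 0) :
    ∀ P, (∏ i ∈ s, d (v i)) * P ∈ ann c → ∃ M : ℤ, M ≠ 0 ∧ d (M • u) * P ∈ ann c := by
  classical
  induction s using Finset.induction_on with
  | empty => intro P h; exact ⟨1, one_ne_zero, (ann c).mul_mem_left _ (by simpa using h)⟩
  | insert i s hi ih =>
    intro P h
    rw [Finset.prod_insert hi, mul_comm (d (v i)), mul_assoc] at h
    obtain ⟨M, hM, hMP⟩ := ih (fun j hj => hv j (Finset.mem_insert_of_mem hj)) _ h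
    suffices ∃ N : ℤ, N ≠ 0 ∧ d (N • u) * (d (M • u) * P) ∈ ann c by
      obtain ⟨N, hN, hNP⟩ := this
      exact ⟨N * M, mul_ne_zero hN hM, ann_combine hc hNP⟩
    have hMP' : d (v i) * (d (M • u) * P) ∈ ann c := by rwa [mul_left_comm]
    have hvi := hv i (Finset.mem_insert_self i s)
    by_cases hdet : det2 u (v i) = 0
    · obtain ⟨k, m, hm, hkm⟩ : ∃ k m : ℤ, m ≠ 0 ∧ k • v i = m • u := by
        simp only [det2] at hdet
        by_cases h1 : (v i).1 = 0
        · have h2 : (v i).2 ≠ 0 := fun h2 => hvi (Prod.ext h1 h2)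
          refine ⟨u.2, (v i).2, h2, ?_⟩
          ext <;> simp <;> linarith
        · refine ⟨u.1, (v i).1, h1, ?_⟩
          ext <;> simp <;> linarith
      obtain ⟨A, hA⟩ := d_dvd_smul k (v i)
      refine ⟨m, hm, ?_⟩
      rw [← hkm, hA, mul_comm (d (v i)), mul_assoc]
      exact (ann c).mul_mem_left _ hMP'
    · obtain ⟨t, w, hw, htw⟩ := hann (v i) hdet
      refine replace_factor hc (Finset.insertNone t) (fun o => o.elim u w) ?_ hMP' ?_
      · intro o ho
        cases o with
        | none => exact hdet
        | some j => exact hw j (by simpa using ho)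
      · rw [Finset.prod_insertNone]
        exact htw

/-! ### Directions of the cluster -/

lemma det2_eq_zero_of_mem_span {v w : ℤ × ℤ} {z : ℝ × ℝ}
    (hv : toR v ∈ Submodule.span ℝ {z}) (hw : toR w ∈ Submodule.span ℝ {z}) : det2 v w = 0 := by
  obtain ⟨a, ha⟩ := Submodule.mem_span_singleton.1 hv
  obtain ⟨b, hb⟩ := Submodule.mem_span_singleton.1 hw
  have h1 := congrArg Prod.fst ha
  have h2 := congrArg Prod.snd ha
  have h3 := congrArg Prod.fst hb
  have h4 := congrArg Prod.snd hb
  simp only [toR, Prod.smul_fst, Prod.smul_snd, smul_eq_mul] at h1 h2 h3 h4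
  have : ((det2 v w : ℤ) : ℝ) = 0 := by
    simp only [det2]
    push_cast
    rw [← h1, ← h2, ← h3, ← h4]
    ring
  exact_mod_cast this

lemma mem_span_of_det2_eq_zero {v w : ℤ × ℤ} (hv : v ≠ 0) (h : det2 w v = 0) :
    toR w ∈ Submodule.span ℝ {toR v} := by
  have h' : (w.1 : ℝ) * v.2 - w.2 * v.1 = 0 := by exact_mod_cast h
  rw [Submodule.mem_span_singleton]
  by_cases h1 : v.1 = 0
  · have h2 : (v.2 : ℝ) ≠ 0 := by exact_mod_cast fun h2 => hv (Prod.ext h1 h2)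
    refine ⟨w.2 / v.2, ?_⟩
    ext
    · simp only [toR, Prod.smul_fst, smul_eq_mul]
      field_simp
      linarith
    · simp only [toR, Prod.smul_snd, smul_eq_mul]
      field_simp
  · have h2 : (v.1 : ℝ) ≠ 0 := by exact_mod_cast h1
    refine ⟨w.1 / v.1, ?_⟩
    ext
    · simp only [toR, Prod.smul_fst, smul_eq_mul]
      field_simp
    · simp only [toR, Prod.smul_snd, smul_eq_mul]
      field_simp
      linarith

lemma toR_sub (v w : ℤ × ℤ) : toR (v - w) = toR v - toR w := by
  simp [toR]

lemma isLine_span {v : ℤ × ℤ} (hv : v ≠ 0) : IsLine (Submodule.span ℝ {toR v}) := by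
  refine ⟨toR v, fun h => hv ?_, rfl⟩
  have h1 := congrArg Prod.fst h
  have h2 := congrArg Prod.snd h
  simp only [toR, Prod.fst_zero, Prod.snd_zero, Int.cast_eq_zero] at h1 h2
  exact Prod.ext h1 h2

/-- A rational direction outside `dir(F)` has a translate meeting `F` in a single point `f₁`. -/
lemma exists_isolated (F : Finset (ℤ × ℤ)) {v : ℤ × ℤ} (hv : v ≠ 0)
    (h : Submodule.span ℝ {toR v} ∉ dirSet (F : Set (ℤ × ℤ))) :
    ∃ f₁ ∈ F, ∀ f ∈ F.erase f₁, det2 (f - f₁) v ≠ 0 := by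
  by_contra hcon
  push Not at hcon
  refine h ⟨isLine_span hv, ?_⟩
  rintro a ⟨s, hs, hsa⟩
  obtain ⟨f, hf, hdet⟩ := hcon s hs
  refine ⟨s, hs, f, Finset.mem_of_mem_erase hf, (Finset.ne_of_mem_erase hf).symm, hsa, ?_⟩
  have := Submodule.add_mem _ hsa (mem_span_of_det2_eq_zero hv hdet)
  rw [toR_sub] at this
  convert this using 1
  abel

/-- The vector `u` spans the only line of `dir(F)`, which is rational because it joins two points
of `F`; if `dir(F)` is empty, any nonzero vector serves. -/
lemma exists_direction (F : Finset (ℤ × ℤ)) (hF : F.Nonempty)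
    (hdir : (dirSet (F : Set (ℤ × ℤ))).Subsingleton) :
    ∃ u : ℤ × ℤ, u ≠ 0 ∧ ∀ v, det2 u v ≠ 0 →
      ∃ f₁ ∈ F, ∀ f ∈ F.erase f₁, det2 (f - f₁) v ≠ 0 := by
  have hne : ∀ u v, det2 u v ≠ 0 → v ≠ 0 := by
    rintro u v h rfl
    simp [det2] at h
  rcases (dirSet (F : Set (ℤ × ℤ))).eq_empty_or_nonempty with hempty | ⟨ℓ, hℓ⟩
  · refine ⟨(1, 0), by simp, fun v hv => exists_isolated F (hne _ _ hv) ?_⟩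
    rw [hempty]
    exact Set.notMem_empty _
  · obtain ⟨f, hf⟩ := hF
    obtain ⟨s, -, t, -, hst, h1, h2⟩ := hℓ.2 (toR f) ⟨f, hf, by simp⟩
    refine ⟨s - t, sub_ne_zero.2 hst, fun v hv => exists_isolated F (hne _ _ hv) fun hmem => ?_⟩
    have h3 := hdir hℓ hmem
    have h4 : toR (s - t) ∈ ℓ := by
      have := ℓ.sub_mem h1 h2
      rwa [sub_sub_sub_cancel_right, ← toR_sub] at this
    rw [h3] at h4
    exact hv (det2_eq_zero_of_mem_span h4 (Submodule.mem_span_singleton_self _))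

/-- The tiling condition as a convolution equation for the indicator function. -/
lemma IsTiling.sum_indicator {F : Finset (ℤ × ℤ)} {T : Set (ℤ × ℤ)} (hT : IsTiling F T)
    (x : ℤ × ℤ) : ∑ f ∈ F, T.indicator (fun _ => (1 : ℤ)) (x - f) = 1 := by
  obtain ⟨⟨t, f⟩, ⟨ht, hf, hx⟩, huniq⟩ := hT x
  simp only at ht hf hx huniq
  rw [Finset.sum_eq_single_of_mem f hf]
  · rw [hx, add_sub_cancel_right, Set.indicator_of_mem ht]
  · intro f' hf' hne
    apply Set.indicator_of_notMem
    intro hmem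
    have := huniq (x - f', f') ⟨hmem, hf', by simp⟩
    exact hne (congrArg Prod.snd this)

/-- If `F` is an exact cluster whose direction set contains at most one
line, then every `F`-tiling `T` is `1`-periodic: `T + g = T` for some nonzero `g`. -/
theorem stmt4 (F : Finset (ℤ × ℤ)) (hF : F.Nonempty)
    (hdir : (dirSet (F : Set (ℤ × ℤ))).Subsingleton)
    (T : Set (ℤ × ℤ)) (hT : IsTiling F T) :
    ∃ g : ℤ × ℤ, g ≠ 0 ∧ (fun p => p + g) '' T = T := by
  classical
  set c : ℤ × ℤ → ℤ := T.indicator (fun _ => (1 : ℤ)) with hcdef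
  have hc01 : ∀ x, c x = 0 ∨ c x = 1 := fun x => by
    by_cases hx : x ∈ T <;> simp [hcdef, hx]
  have hcb : ∃ B, ∀ x, |c x| ≤ B :=
    ⟨1, fun x => by rcases hc01 x with h | h <;> simp [h]⟩
  obtain ⟨u, hu, hdirs⟩ := exists_direction F hF hdir
  have hq : (F.card.factorial : ℤ) ≠ 0 := by exact_mod_cast F.card.factorial_ne_zero
  have hspec := special_annihilator F c hc01 hT.sum_indicator u
  obtain ⟨f₀, hf₀⟩ := hF
  obtain ⟨M, hM, hMP⟩ := replace_all hcb
    (fun v hv => by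
      obtain ⟨f₁, hf₁, h⟩ := hdirs v hv
      refine ⟨F.erase f₁, fun f => F.card.factorial • (f - f₁), fun f hf => ?_, hspec f₁ hf₁⟩
      have : det2 (F.card.factorial • (f - f₁)) v
          = F.card.factorial * det2 (f - f₁) v := by
        simp [det2]; ring
      rw [this]
      exact mul_ne_zero hq (h f hf))
    (F.erase f₀) (fun f => F.card.factorial • (f - f₀))
    (fun f hf => smul_ne_zero F.card.factorial_ne_zero
      (sub_ne_zero.2 (Finset.ne_of_mem_erase hf)))
    (d u) (by rw [mul_comm]; exact hspec f₀ hf₀)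
  have hper : d (M • u) * 1 ∈ ann c := by
    have h1 : d (M • u) * (d ((1 : ℤ) • u) * 1) ∈ ann c := by
      rw [one_smul, mul_one]; exact hMP
    have h2 := ann_combine hcb h1
    rwa [mul_one M] at h2
  have hg : ∀ x, c (x - M • u) = c x := fun x => by
    have := congrFun (mem_ann.1 hper) x
    rw [mul_one, act_d] at this
    simp only [Pi.zero_apply] at this
    linarith
  have hcT : ∀ x, c x = 1 ↔ x ∈ T := fun x => by
    by_cases hx : x ∈ T <;> simp [hcdef, hx]
  refine ⟨M • u, smul_ne_zero hM hu, ?_⟩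
  ext x
  rw [Set.image_add_right, Set.mem_preimage, ← sub_eq_add_neg, ← hcT, ← hcT, hg]
end
end

section
/- Let c : ℤ² → {0,1} and let u, v ∈ ℤ² be linearly independent vectors such that the Laurent polynomial (U^u − 1)(U^v − 1) annihilates c, i.e., c(w) − c(w − u) − c(w − v) + c(w − u − v) = 0 for all w ∈ ℤ². Then there exist binary configurations c₁, c₂ : ℤ² → {0,1} with c = c₁ + c₂ (pointwise, so their supports are disjoint), u·c₁ = c₁ and v·c₂ = c₂. In particular c is weakly periodic, a sum of at most two 1-periodic binary configurations. -/
/-!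
Let `c` be annihilated by `(U^u − 1)(U^v − 1)`. The difference `c w - c (w - v)` is invariant under
translation by `u`, and `c w - c (w - u)` is invariant under translation by `v`. If some
`v`-difference is nonzero on a coset of the subgroup `⟨u, v⟩`, then, `c` being binary, this
difference determines the value of `c` along the whole `u`-line through that point; so `c` is
constant along this line, and by `v`-invariance of the `u`-differences `c` is `u`-periodic on the
coset (`uPeriodicOnCoset_of_ne`). Hence on each coset `c` is `u`-periodic or `v`-periodic, and `c₁`
is the restriction of `c` to the cosets of the first kind, `c₂` the restriction to the others.
-/

noncomputable section

def IsBinary (c : ℤ × ℤ → ℂ) : Prop := ∀ u, c u = 0 ∨ c u = 1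

def shift (g : ℤ × ℤ) (c : ℤ × ℤ → ℂ) : ℤ × ℤ → ℂ := fun u => c (u - g)

def LinIndep (u v : ℤ × ℤ) : Prop := u.1 * v.2 - u.2 * v.1 ≠ 0

/-- `c` is invariant under translation by `u` on the coset of `⟨u, v⟩` through `w`. -/
def UPeriodicOnCoset (c : ℤ × ℤ → ℂ) (u v w : ℤ × ℤ) : Prop :=
  ∀ i j : ℤ, c (w + i • u + j • v - u) = c (w + i • u + j • v)

lemma uPeriodicOnCoset_sub_left (c : ℤ × ℤ → ℂ) (u v w : ℤ × ℤ) :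
    UPeriodicOnCoset c u v (w - u) ↔ UPeriodicOnCoset c u v w := by
  constructor
  · intro h i j
    have e : w - u + (i + 1) • u + j • v = w + i • u + j • v := by module
    simpa only [e] using h (i + 1) j
  · intro h i j
    have e : w + (i - 1) • u + j • v = w - u + i • u + j • v := by module
    simpa only [e] using h (i - 1) j

lemma uPeriodicOnCoset_sub_right (c : ℤ × ℤ → ℂ) (u v w : ℤ × ℤ) :
    UPeriodicOnCoset c u v (w - v) ↔ UPeriodicOnCoset c u v w := by
  constructor
  · intro h i j
    have e : w - v + i • u + (j + 1) • v = w + i • u + j • v := by module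
    simpa only [e] using h i (j + 1)
  · intro h i j
    have e : w + i • u + (j - 1) • v = w - v + i • u + j • v := by module
    simpa only [e] using h i (j - 1)

lemma uPeriodicOnCoset_of_ne {c : ℤ × ℤ → ℂ} (hbin : IsBinary c) {u v : ℤ × ℤ}
    (hann : ∀ w : ℤ × ℤ, c w - c (w - u) - c (w - v) + c (w - u - v) = 0)
    {w : ℤ × ℤ} (hw : c (w - v) ≠ c w) : UPeriodicOnCoset c u v w := by
  have hd : Function.Periodic (fun x => c x - c (x - v)) u := by
    intro x
    have h := hann (x + u)
    rw [add_sub_cancel_right] at h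
    linear_combination h
  have he : Function.Periodic (fun x => c x - c (x - u)) v := by
    intro x
    have h := hann (x + v)
    rw [sub_right_comm (x + v) u v, add_sub_cancel_right] at h
    linear_combination h
  have hline : ∀ i : ℤ, c (w + i • u) = c w := by
    intro i
    have h : c (w + i • u) - c (w + i • u - v) = c w - c (w - v) := hd.zsmul i w
    -- a nonzero difference of two elements of `{0, 1}` determines both of them
    rcases hbin (w + i • u) with h1 | h1 <;> rcases hbin (w + i • u - v) with h2 | h2 <;>
      rcases hbin w with h3 | h3 <;> rcases hbin (w - v) with h4 | h4 <;>
      rw [h1, h2, h3, h4] at h <;> rw [h3, h4] at hw <;> rw [h1, h3] <;>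
      revert h hw <;> norm_num
  intro i j
  have h : c (w + i • u + j • v) - c (w + i • u + j • v - u)
      = c (w + i • u) - c (w + i • u - u) := he.zsmul j (w + i • u)
  have e : w + i • u - u = w + (i - 1) • u := by module
  rw [e, hline, hline] at h
  linear_combination -h

/-- If a binary configuration `c` is annihilated by
`(U^u − 1)(U^v − 1)` for linearly independent `u, v ∈ ℤ²`, then `c = c₁ + c₂` with
`c₁, c₂` binary configurations (so with disjoint supports), `u·c₁ = c₁` and `v·c₂ = c₂`;
in particular `c` is a sum of at most two `1`-periodic binary configurations. -/
theorem stmt5 (c : ℤ × ℤ → ℂ) (hbin : IsBinary c) (u v : ℤ × ℤ)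
    (huv : LinIndep u v)
    (hann : ∀ w : ℤ × ℤ, c w - c (w - u) - c (w - v) + c (w - u - v) = 0) :
    ∃ c₁ c₂ : ℤ × ℤ → ℂ, IsBinary c₁ ∧ IsBinary c₂ ∧ c = c₁ + c₂ ∧
      shift u c₁ = c₁ ∧ shift v c₂ = c₂ := by
  classical
  refine ⟨fun w => if UPeriodicOnCoset c u v w then c w else 0,
    fun w => if UPeriodicOnCoset c u v w then 0 else c w, ?_, ?_, ?_, ?_, ?_⟩
  · intro w
    dsimp only
    split_ifs
    exacts [hbin w, Or.inl rfl]
  · intro w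
    dsimp only
    split_ifs
    exacts [Or.inl rfl, hbin w]
  · funext w
    by_cases h : UPeriodicOnCoset c u v w <;> simp [h]
  · funext w
    simp only [shift, uPeriodicOnCoset_sub_left]
    split_ifs with h
    · simpa using h 0 0
    · rfl
  · funext w
    simp only [shift, uPeriodicOnCoset_sub_right]
    split_ifs with h
    · rfl
    · by_contra hne
      exact h (uPeriodicOnCoset_of_ne hbin hann hne)
end
end

section
/- Let d : ℤ² → {0,1} satisfy d(a+1, b+1) + d(a, b) = d(a+1, b) + d(a, b+1) for all (a, b) ∈ ℤ². Then either d(a+1, b) = d(a, b) for all (a, b) ∈ ℤ², or d(a, b+1) = d(a, b) for all (a, b) ∈ ℤ². In other words, d is invariant under translation by (1,0) or under translation by (0,1). -/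
/-!
The hypothesis says that the horizontal difference `d (a + 1, b) - d (a, b)` does not depend
on `b`, and that the vertical difference `d (a, b + 1) - d (a, b)` does not depend on `a`.
If neither invariance holds, some column step has a nonzero difference `D` and some row step a
nonzero difference `E`; both then occur at one common unit square, whose corners carry
`x`, `x + D`, `x + E`, `x + D + E`. As `D, E ≠ 0`, two of these differ by at least `2`,
which is impossible for values in `{0, 1}`.
-/

theorem const_of_step (p : ℤ → ℤ) (hp : ∀ n, p (n + 1) = p n) (m n : ℤ) : p m = p n := by
  have key : ∀ k : ℤ, p k = p 0 := by
    intro k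
    induction k using Int.induction_on with
    | zero => rfl
    | succ i ih => rw [hp, ih]
    | pred i ih => rw [← hp, sub_add_cancel, ih]
  rw [key m, key n]

/-- If `d : ℤ² → {0,1}` satisfies
`d(a+1,b+1) + d(a,b) = d(a+1,b) + d(a,b+1)` everywhere, then `d` is invariant under
translation by `(1,0)` or under translation by `(0,1)`. -/
theorem stmt6 (d : ℤ × ℤ → ℤ) (hbin : ∀ w : ℤ × ℤ, d w = 0 ∨ d w = 1)
    (h : ∀ a b : ℤ, d (a + 1, b + 1) + d (a, b) = d (a + 1, b) + d (a, b + 1)) :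
    (∀ a b : ℤ, d (a + 1, b) = d (a, b)) ∨ (∀ a b : ℤ, d (a, b + 1) = d (a, b)) := by
  by_contra hcon
  rw [not_or] at hcon
  obtain ⟨h1, h2⟩ := hcon
  push Not at h1 h2
  obtain ⟨a, b', hD⟩ := h1
  obtain ⟨a', b, hE⟩ := h2
  -- Both nonzero differences are transported to the unit square with lower-left corner `(a, b)`.
  have e1 := const_of_step (fun n => d (a + 1, n) - d (a, n))
    (fun n => by have := h a n; omega) b' b
  have e2 := const_of_step (fun n => d (n, b + 1) - d (n, b))
    (fun n => by have := h n b; omega) a' a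
  have := h a b
  have c1 := hbin (a, b)
  have c2 := hbin (a + 1, b)
  have c3 := hbin (a, b + 1)
  have c4 := hbin (a + 1, b + 1)
  omega
end

section
/- There exists a configuration c : ℤ² → {0, 1, 2} such that c(w) − c(w − (1,0)) − c(w − (0,1)) + c(w − (1,1)) = 0 for all w ∈ ℤ² (i.e. c is annihilated by (U^{(1,0)} − 1)(U^{(0,1)} − 1)), and yet c is not constant on any infinite arithmetic progression: for every p ∈ ℤ² and every nonzero g ∈ ℤ² there exist integers n, m with c(p + n·g) ≠ c(p + m·g). In particular, no nonempty level set c⁻¹(i) can be partitioned into finitely many 1-periodic subsets of ℤ². -/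
/-!
Take `c (x, y) = a x + b y`, which is annihilated by `(U^{(1,0)} − 1)(U^{(0,1)} − 1)` for any
`a, b : ℤ → {0, 1}`. Let `a x` and `b x` be the binary digits of weight `1` and `2` of
`Nat.log 2 |x|`. By `log_along_progression`, along the terms `n = 3 * 2 ^ j` of a progression
`p + n * g` with `g ≠ 0` the logarithm is eventually `j + L` for a constant `L`. Hence passing from
`j` to `j + 1` always flips `a`, passing from `j` to `j + 2` always flips `b`, and `b` is unchanged
from `j` to `j + 1` when `j + L` is a multiple of `4`. One of these comparisons separates two
values of `c` on any given progression.
-/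

/-- A subset of `ℤ²` is `1`-periodic if it is invariant under translation by some
nonzero vector. -/
def OnePeriodicSet (S : Set (ℤ × ℤ)) : Prop :=
  ∃ g : ℤ × ℤ, g ≠ 0 ∧ (fun p => p + g) '' S = S

/-- The factor `3` makes the coefficient `3 * |g|` differ from every power of two, so that adding
`p` to `3 * 2 ^ j * g` cannot change the logarithm once `|p| < 2 ^ j`. -/
lemma log_along_progression (p g : ℤ) (hg : g ≠ 0) :
    ∃ L : ℕ, ∀ j : ℕ, p.natAbs ≤ j → Nat.log 2 (p + 3 * 2 ^ j * g).natAbs = j + L := by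
  have hG : 3 * g.natAbs ≠ 0 := by omega
  refine ⟨Nat.log 2 (3 * g.natAbs), fun j hj => ?_⟩
  set L := Nat.log 2 (3 * g.natAbs) with hL
  have h1 : 2 ^ L ≤ 3 * g.natAbs := Nat.pow_log_le_self 2 hG
  have h2 : 3 * g.natAbs < 2 ^ (L + 1) := Nat.lt_pow_succ_log_self (by norm_num) _
  have h3 : 2 ^ L ≠ 3 * g.natAbs := by
    intro h
    have : 3 ∣ 2 ^ L := ⟨_, h⟩
    have := Nat.Prime.dvd_of_dvd_pow Nat.prime_three this
    omega
  have h4 : p.natAbs < 2 ^ j := lt_of_le_of_lt hj Nat.lt_two_pow_self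
  have h5 : (3 * 2 ^ j * g).natAbs = 2 ^ j * (3 * g.natAbs) := by
    rw [Int.natAbs_mul, Int.natAbs_mul, Int.natAbs_pow]
    simp only [Int.reduceAbs]
    ring
  have h6 : 2 ^ j * (2 ^ L + 1) ≤ 2 ^ j * (3 * g.natAbs) := Nat.mul_le_mul_left _ (by omega)
  have h7 : 2 ^ j * (3 * g.natAbs + 1) ≤ 2 ^ j * 2 ^ (L + 1) := Nat.mul_le_mul_left _ (by omega)
  rw [mul_add, mul_one] at h6 h7
  apply Nat.log_eq_of_pow_le_of_lt_pow
  · rw [pow_add]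
    omega
  · rw [add_assoc, pow_add 2 j]
    omega

/-- There is a configuration `c : ℤ² → {0,1,2}` annihilated by
`(U^{(1,0)} − 1)(U^{(0,1)} − 1)` which is not constant on any infinite arithmetic
progression; in particular no nonempty level set of `c` can be partitioned into finitely
many `1`-periodic subsets. -/
theorem stmt8 :
    ∃ c : ℤ × ℤ → ℤ,
      (∀ w : ℤ × ℤ, c w ∈ ({0, 1, 2} : Set ℤ)) ∧
      (∀ w : ℤ × ℤ, c w - c (w - (1, 0)) - c (w - (0, 1)) + c (w - (1, 1)) = 0) ∧
      (∀ p g : ℤ × ℤ, g ≠ 0 → ∃ n m : ℤ, c (p + n • g) ≠ c (p + m • g)) := by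
  refine ⟨fun w => ((Nat.log 2 w.1.natAbs % 2 + Nat.log 2 w.2.natAbs / 2 % 2 : ℕ) : ℤ),
    ?_, ?_, ?_⟩
  · intro w
    simp only [Set.mem_insert_iff, Set.mem_singleton_iff]
    omega
  · rintro ⟨x, y⟩
    simp only [Prod.mk_sub_mk, sub_zero]
    push_cast
    ring
  · rintro ⟨p, q⟩ ⟨g, h⟩ hgh
    simp only [Prod.smul_mk, Prod.mk_add_mk, smul_eq_mul, ne_eq, Nat.cast_inj]
    by_cases hg : g = 0
    · -- Vertical progression: only `b` varies, and it flips from `j` to `j + 2`.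
      have hh : h ≠ 0 := by
        rintro rfl
        exact hgh (by simp [hg])
      obtain ⟨L, hL⟩ := log_along_progression q h hh
      refine ⟨3 * 2 ^ q.natAbs, 3 * 2 ^ (q.natAbs + 2), ?_⟩
      rw [hL _ le_rfl, hL _ (by omega), hg, mul_zero, mul_zero]
      omega
    · obtain ⟨L, hL⟩ := log_along_progression p g hg
      by_cases hh : h = 0
      · refine ⟨3 * 2 ^ p.natAbs, 3 * 2 ^ (p.natAbs + 1), ?_⟩
        rw [hL _ le_rfl, hL _ (by omega), hh, mul_zero, mul_zero]
        omega
      · obtain ⟨M, hM⟩ := log_along_progression q h hh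
        -- With `j + M` a multiple of `4`, `b` is unchanged from `j` to `j + 1` while `a` flips.
        obtain ⟨j, hjp, hjq, hj⟩ : ∃ j, p.natAbs ≤ j ∧ q.natAbs ≤ j ∧ (j + M) % 4 = 0 :=
          ⟨4 * (p.natAbs + q.natAbs + M) - M, by omega, by omega, by omega⟩
        refine ⟨3 * 2 ^ j, 3 * 2 ^ (j + 1), ?_⟩
        rw [hL _ hjp, hM _ hjq, hL _ (by omega), hM _ (by omega)]
        omega
end

section
/- Let p be a prime and S ⊆ ℤ² a finite set of cardinality p² such that for every a ∈ ℤ, p divides the cardinality of {s ∈ S : s₁ = a} and p divides the cardinality of {s ∈ S : s₂ = a} (i.e. every vertical line and every horizontal line meets S in a set of cardinality divisible by p). Then there exist finite sets A, B ⊆ ℤ with |A| = |B| = p and S = A × B. -/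
/-!
Each nonempty vertical line carries at least `p` of the `p²` points, so the projection `A` of `S`
to the first coordinate has at most `p` elements; likewise for the second projection `B`.
Since `S ⊆ A × B`, we get `p² = |S| ≤ |A| |B| ≤ p²`, and equality throughout gives the claim.
-/

/-- A set of `p²` points whose fibres under `f` all have size divisible by `p` has an image of
size at most `p`, as each nonempty fibre has at least `p` points. -/
lemma card_image_le_of_dvd_fibers {α : Type*} (p : ℕ) (hp : 0 < p) (S : Finset α)
    (f : α → ℤ) (hcard : S.card = p ^ 2)
    (hdvd : ∀ a : ℤ, p ∣ (S.filter fun s => f s = a).card) :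
    (S.image f).card ≤ p := by
  have h : (S.image f).card * p ≤ S.card := by
    rw [Finset.card_eq_sum_card_image f S, ← smul_eq_mul]
    refine Finset.card_nsmul_le_sum _ _ _ fun a ha => ?_
    obtain ⟨s, hs, hsa⟩ := Finset.mem_image.mp ha
    exact Nat.le_of_dvd (Finset.card_pos.mpr ⟨s, Finset.mem_filter.mpr ⟨hs, hsa⟩⟩) (hdvd a)
  rw [hcard, sq] at h
  exact Nat.le_of_mul_le_mul_right h hp

/-- If `p` is prime and `S ⊆ ℤ²` has cardinality `p²` such that every
vertical and every horizontal line meets `S` in a set of cardinality divisible by `p`,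
then `S = A × B` for some `A, B ⊆ ℤ` with `|A| = |B| = p`. -/
theorem stmt11 (p : ℕ) (hp : p.Prime) (S : Finset (ℤ × ℤ)) (hcard : S.card = p ^ 2)
    (hvert : ∀ a : ℤ, p ∣ (S.filter fun s => s.1 = a).card)
    (hhoriz : ∀ a : ℤ, p ∣ (S.filter fun s => s.2 = a).card) :
    ∃ A B : Finset ℤ, A.card = p ∧ B.card = p ∧ S = A ×ˢ B := by
  have hA := card_image_le_of_dvd_fibers p hp.pos S Prod.fst hcard hvert
  have hB := card_image_le_of_dvd_fibers p hp.pos S Prod.snd hcard hhoriz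
  have hsub : S ⊆ S.image Prod.fst ×ˢ S.image Prod.snd := Finset.subset_product
  have hle := Finset.card_le_card hsub
  rw [Finset.card_product, hcard] at hle
  have hpos := hp.pos
  refine ⟨S.image Prod.fst, S.image Prod.snd, ?_, ?_, ?_⟩
  · exact le_antisymm hA (by nlinarith)
  · exact le_antisymm hB (by nlinarith)
  · refine Finset.eq_of_subset_of_card_le hsub ?_
    rw [Finset.card_product, hcard, sq]
    exact Nat.mul_le_mul hA hB
end

section
/- Let p be a prime, F ⊆ ℤ² a finite set containing the origin, and g₀ = (g₁, g₂) ∈ ℤ² a nonzero vector. Suppose there are infinitely many points (x, y) ∈ [0,1)² such that g₁x + g₂y ∈ ℤ and, for every integer α coprime to p, Σ_{(a,b)∈F} exp(2πiα(ax + by)) = 0. Then for every w ∈ ℤ², p divides the cardinality of {g ∈ F : g − w is a rational multiple of g₀}; that is, every line in ℝ² parallel to g₀ meets F in a set of cardinality divisible by p. -/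
/-!
For `ξ = (x, y)` write `z g = exp (2πi ⟨g, ξ⟩)`. If `∑ z g ^ α = 0` for all `α` prime to `p`, then,
taking `α = r + p m` with `0 < r < p` and letting `m` vary, polynomial interpolation in `z g ^ p`
shows that `∑ z g ^ r` already vanishes over each fibre `{g | z g ^ p = u}`. Normalising by one
element `z₀` of the fibre and summing over `r`, orthogonality of `p`-th roots of unity gives that
the fibre has exactly `p * #{g | z g = z₀}` elements; hence all fibres have size divisible by `p`
(`dvd_card_fiber`).

It remains to choose `ξ` so that `z g ^ p` separates the lines parallel to `g₀`. If `g`, `g'` lie on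
different lines and `z g ^ p = z g' ^ p`, then both `⟨g₀, ξ⟩` and `⟨p (g - g'), ξ⟩` are integers, with
`g₀` and `p (g - g')` linearly independent; only finitely many `ξ ∈ [0,1)²` satisfy this
(`finite_bad`). As there are infinitely many admissible `ξ`, one of them separates all lines, and
then each line meets `F` in a union of fibres.
-/

open Complex

open Finset in
/-- Vanishing of all power moments of a weighted finite family implies vanishing of every
moment, since every function on a finite set is a polynomial. -/
lemma sum_mul_eq_zero_of_moments {ι : Type*} (s : Finset ι) (a v : ι → ℂ)
    (h : ∀ m : ℕ, ∑ i ∈ s, a i * v i ^ m = 0) (φ : ℂ → ℂ) :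
    ∑ i ∈ s, a i * φ (v i) = 0 := by
  classical
  set P := Lagrange.interpolate (s.image v) id φ with hP
  have hev : ∀ i ∈ s, P.eval (v i) = φ (v i) := fun i hi =>
    Lagrange.eval_interpolate_at_node φ (Set.injOn_id _) (mem_image_of_mem v hi)
  calc ∑ i ∈ s, a i * φ (v i)
      = ∑ i ∈ s, ∑ m ∈ range (P.natDegree + 1), P.coeff m * (a i * v i ^ m) := by
        refine sum_congr rfl fun i hi => ?_
        rw [← hev i hi, Polynomial.eval_eq_sum_range, mul_sum]
        exact sum_congr rfl fun m _ => by ring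
    _ = 0 := by
        rw [sum_comm]
        refine sum_eq_zero fun m _ => ?_
        rw [← mul_sum, h m, mul_zero]

open Finset in
lemma dvd_card_fiber {ι : Type*} (p : ℕ) (hp : p.Prime) (s : Finset ι) (z : ι → ℂ)
    (hz : ∀ i, z i ≠ 0) (h : ∀ n : ℕ, n.Coprime p → ∑ i ∈ s, z i ^ n = 0) (u : ℂ) :
    p ∣ #{i ∈ s | z i ^ p = u} := by
  classical
  rcases Finset.eq_empty_or_nonempty {i ∈ s | z i ^ p = u} with he | ⟨j, hj⟩
  · simp [he]
  have hju : z j ^ p = u := (mem_filter.1 hj).2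
  have hr : ∀ r ∈ range p, r ≠ 0 → ∑ i ∈ s with z i ^ p = u, (z i / z j) ^ r = 0 := by
    intro r hr hr0
    have key := sum_mul_eq_zero_of_moments s (fun i => z i ^ r) (fun i => z i ^ p)
      (fun m => by
        have := h (r + p * m) (by
          rw [Nat.coprime_add_mul_left_left]
          exact (Nat.coprime_of_lt_prime hr0 (mem_range.1 hr) hp).symm)
        simpa [pow_add, pow_mul] using this)
      (fun x => if x = u then 1 else 0)
    simp only [mul_ite, mul_one, mul_zero, ← sum_filter] at key
    simp only [div_pow, ← sum_div, key, zero_div]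
  have hgeom : ∀ i ∈ s.filter (fun i => z i ^ p = u),
      ∑ r ∈ range p, (z i / z j) ^ r = if z i = z j then (p : ℂ) else 0 := by
    intro i hi
    split_ifs with hij
    · simp [hij, div_self (hz j)]
    · have h1 : (z i / z j) ^ p = 1 := by
        rw [div_pow, (mem_filter.1 hi).2, hju, div_self]
        rw [← hju]; exact pow_ne_zero _ (hz j)
      have hne : z i / z j ≠ 1 := fun h => hij ((div_eq_one_iff_eq (hz j)).1 h)
      rw [geom_sum_eq hne, h1, sub_self, zero_div]
  have hsum : ((#{i ∈ s | z i ^ p = u} : ℕ) : ℂ)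
      = ((p * #{i ∈ s.filter (fun i => z i ^ p = u) | z i = z j} : ℕ) : ℂ) := by
    calc ((#{i ∈ s | z i ^ p = u} : ℕ) : ℂ)
        = ∑ r ∈ range p, ∑ i ∈ s with z i ^ p = u, (z i / z j) ^ r := by
          rw [sum_eq_single_of_mem 0 (mem_range.2 hp.pos) hr]
          simp
      _ = ∑ i ∈ s with z i ^ p = u, if z i = z j then (p : ℂ) else 0 := by
          rw [sum_comm]; exact sum_congr rfl hgeom
      _ = _ := by
          rw [← sum_filter, sum_const, nsmul_eq_mul]; push_cast; ring
  exact ⟨_, Nat.cast_injective hsum⟩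

lemma finite_bad (a b c d : ℤ) (hdet : a * d - b * c ≠ 0) :
    {xy : ℝ × ℝ | 0 ≤ xy.1 ∧ xy.1 < 1 ∧ 0 ≤ xy.2 ∧ xy.2 < 1 ∧
      (∃ z : ℤ, (a : ℝ) * xy.1 + b * xy.2 = z) ∧
      (∃ z : ℤ, (c : ℝ) * xy.1 + d * xy.2 = z)}.Finite := by
  have hdet' : (a * d - b * c : ℝ) ≠ 0 := by exact_mod_cast hdet
  -- An integer value of a linear form on the unit square is bounded by the sum of the `|coeff|`.
  have bd : ∀ (e f z : ℤ) (x y : ℝ), 0 ≤ x → x < 1 → 0 ≤ y → y < 1 →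
      (e : ℝ) * x + f * y = z → z ∈ Set.Icc (-(|e| + |f|)) (|e| + |f|) := by
    intro e f z x y hx hx1 hy hy1 h
    rw [Set.mem_Icc, ← abs_le]
    have : |(z : ℝ)| ≤ |(e : ℝ)| + |(f : ℝ)| := by
      rw [← h]
      refine (abs_add_le _ _).trans ?_
      rw [abs_mul, abs_mul, abs_of_nonneg hx, abs_of_nonneg hy]
      exact add_le_add (mul_le_of_le_one_right (abs_nonneg _) hx1.le)
        (mul_le_of_le_one_right (abs_nonneg _) hy1.le)
    exact_mod_cast this
  have hfin := (((Set.finite_Icc (-(|a| + |b|)) (|a| + |b|)).prod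
    (Set.finite_Icc (-(|c| + |d|)) (|c| + |d|))).image
      (fun q : ℤ × ℤ => ((q.1 : ℝ), (q.2 : ℝ))))
  have hinj : Function.Injective
      (fun xy : ℝ × ℝ => ((a : ℝ) * xy.1 + b * xy.2, (c : ℝ) * xy.1 + d * xy.2)) := by
    rintro ⟨x, y⟩ ⟨x', y'⟩ h
    simp only [Prod.mk.injEq] at h ⊢
    obtain ⟨h1, h2⟩ := h
    constructor
    · apply mul_left_cancel₀ hdet'
      linear_combination (d : ℝ) * h1 - b * h2
    · apply mul_left_cancel₀ hdet'
      linear_combination (a : ℝ) * h2 - c * h1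
  refine (hfin.preimage hinj.injOn).subset ?_
  rintro ⟨x, y⟩ ⟨hx, hx1, hy, hy1, ⟨z, hz⟩, ⟨t, ht⟩⟩
  exact ⟨(z, t), ⟨bd a b z x y hx hx1 hy hy1 hz, bd c d t x y hx hx1 hy hy1 ht⟩,
    by simp only [hz, ht]⟩

/-- Lines parallel to `g₀` are the level sets of the cross product with `g₀`. -/
lemma exists_rat_mul_iff (g₀ g w : ℤ × ℤ) (hg₀ : g₀ ≠ 0) :
    (∃ t : ℚ, ((g.1 - w.1 : ℤ) : ℚ) = t * (g₀.1 : ℚ) ∧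
      ((g.2 - w.2 : ℤ) : ℚ) = t * (g₀.2 : ℚ)) ↔
    g.1 * g₀.2 - g.2 * g₀.1 = w.1 * g₀.2 - w.2 * g₀.1 := by
  constructor
  · rintro ⟨t, h1, h2⟩
    push_cast at h1 h2
    have : (g.1 * g₀.2 - g.2 * g₀.1 : ℚ) = w.1 * g₀.2 - w.2 * g₀.1 := by
      linear_combination (g₀.2 : ℚ) * h1 - g₀.1 * h2
    exact_mod_cast this
  · intro h
    have hQ : (g.1 * g₀.2 - g.2 * g₀.1 : ℚ) = w.1 * g₀.2 - w.2 * g₀.1 := by exact_mod_cast h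
    by_cases h1 : g₀.1 = 0
    · have h2 : g₀.2 ≠ 0 := fun h2 => hg₀ (Prod.ext h1 h2)
      have h2' : (g₀.2 : ℚ) ≠ 0 := by exact_mod_cast h2
      refine ⟨(g.2 - w.2) / g₀.2, ?_, ?_⟩
      · push_cast
        field_simp
        linear_combination hQ
      · push_cast
        field_simp
    · have h1' : (g₀.1 : ℚ) ≠ 0 := by exact_mod_cast h1
      refine ⟨(g.1 - w.1) / g₀.1, ?_, ?_⟩
      · push_cast
        field_simp
      · push_cast
        field_simp
        linear_combination -hQ

/-- Let `p` be a prime, `F ⊆ ℤ²` a finite set containing the origin,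
and `g₀ ∈ ℤ²` a nonzero vector. If there are infinitely many points `(x,y) ∈ [0,1)²`
with `g₀.1·x + g₀.2·y ∈ ℤ` satisfying `Σ_{(a,b)∈F} exp(2πiα(ax+by)) = 0` for every
integer `α` coprime to `p`, then every line of `ℝ²` parallel to `g₀` meets `F` in a set
of cardinality divisible by `p`. -/
theorem stmt13 (p : ℕ) (hp : p.Prime) (F : Finset (ℤ × ℤ)) (h0 : (0, 0) ∈ F)
    (g₀ : ℤ × ℤ) (hg₀ : g₀ ≠ 0)
    (hinf : {xy : ℝ × ℝ |
        0 ≤ xy.1 ∧ xy.1 < 1 ∧ 0 ≤ xy.2 ∧ xy.2 < 1 ∧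
        (∃ z : ℤ, (g₀.1 : ℝ) * xy.1 + (g₀.2 : ℝ) * xy.2 = (z : ℝ)) ∧
        (∀ α : ℤ, Int.gcd α (p : ℤ) = 1 →
          ∑ ab ∈ F, Complex.exp (2 * (Real.pi : ℂ) * Complex.I * (α : ℂ) *
            ((ab.1 : ℂ) * (xy.1 : ℂ) + (ab.2 : ℂ) * (xy.2 : ℂ))) = 0)}.Infinite) :
    ∀ w : ℤ × ℤ,
      p ∣ {g ∈ (F : Set (ℤ × ℤ)) | ∃ t : ℚ,
          ((g.1 - w.1 : ℤ) : ℚ) = t * (g₀.1 : ℚ) ∧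
          ((g.2 - w.2 : ℤ) : ℚ) = t * (g₀.2 : ℚ)}.ncard := by
  classical
  intro w
  let cr : ℤ × ℤ → ℤ := fun g => g.1 * g₀.2 - g.2 * g₀.1
  have hset : {g ∈ (F : Set (ℤ × ℤ)) | ∃ t : ℚ,
      ((g.1 - w.1 : ℤ) : ℚ) = t * (g₀.1 : ℚ) ∧
      ((g.2 - w.2 : ℤ) : ℚ) = t * (g₀.2 : ℚ)} = (F.filter (fun g => cr g = cr w) : Finset _) := by
    ext g
    simp only [Set.mem_ofPred_eq, Finset.coe_filter, Finset.mem_coe]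
    rw [exists_rat_mul_iff g₀ g w hg₀]
  rw [hset, Set.ncard_coe_finset]
  -- The finitely many points at which `z g ^ p` fails to separate two lines.
  have hbad : (⋃ q ∈ (F ×ˢ F).filter (fun q => cr q.1 ≠ cr q.2),
      {xy : ℝ × ℝ | 0 ≤ xy.1 ∧ xy.1 < 1 ∧ 0 ≤ xy.2 ∧ xy.2 < 1 ∧
      (∃ z : ℤ, (g₀.1 : ℝ) * xy.1 + g₀.2 * xy.2 = z) ∧
      (∃ z : ℤ, ((p * (q.1.1 - q.2.1) : ℤ) : ℝ) * xy.1
        + ((p * (q.1.2 - q.2.2) : ℤ) : ℝ) * xy.2 = z)}).Finite := by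
    refine Set.Finite.biUnion (Finset.finite_toSet _) fun q hq => finite_bad _ _ _ _ ?_
    have hq' : cr q.1 ≠ cr q.2 := (Finset.mem_filter.1 hq).2
    have hp0 : (p : ℤ) ≠ 0 := by exact_mod_cast hp.ne_zero
    have : g₀.1 * (p * (q.1.2 - q.2.2)) - g₀.2 * (p * (q.1.1 - q.2.1))
        = p * (cr q.2 - cr q.1) := by
      simp only [cr]; ring
    rw [this]
    exact mul_ne_zero hp0 (sub_ne_zero.2 hq'.symm)
  obtain ⟨⟨x, y⟩, ⟨hx, hx1, hy, hy1, hz, hsum⟩, hnot⟩ := (hinf.sdiff hbad).nonempty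
  simp only at hx hx1 hy hy1 hz hsum
  let z : ℤ × ℤ → ℂ := fun g =>
    Complex.exp (2 * (Real.pi : ℂ) * Complex.I * ((g.1 : ℂ) * (x : ℂ) + (g.2 : ℂ) * (y : ℂ)))
  have hfib := dvd_card_fiber p hp F z (fun _ => Complex.exp_ne_zero _) (fun n hn => by
    rw [← hsum n (by simpa using hn)]
    refine Finset.sum_congr rfl fun g _ => ?_
    simp only [z]
    rw [← Complex.exp_nat_mul]
    congr 1
    push_cast
    ring)
  have hsep : ∀ g ∈ F, ∀ g' ∈ F, z g ^ p = z g' ^ p → cr g = cr g' := by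
    intro g hg g' hg' h
    by_contra hne
    apply hnot
    refine Set.mem_biUnion (x := (g, g')) (by simp [hg, hg', hne]) ?_
    refine ⟨hx, hx1, hy, hy1, hz, ?_⟩
    simp only [z] at h
    rw [← Complex.exp_nat_mul, ← Complex.exp_nat_mul, Complex.exp_eq_exp_iff_exists_int] at h
    obtain ⟨n, hn⟩ := h
    refine ⟨n, ?_⟩
    have h2 : (2 * (Real.pi : ℂ) * Complex.I) ≠ 0 := Complex.two_pi_I_ne_zero
    have : ((p * (g.1 - g'.1) : ℤ) : ℂ) * x + ((p * (g.2 - g'.2) : ℤ) : ℂ) * y = n := by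
      apply mul_left_cancel₀ h2
      push_cast
      linear_combination hn
    exact_mod_cast this
  rw [Finset.card_eq_sum_card_image (fun g => z g ^ p)]
  refine Finset.dvd_sum fun u hu => ?_
  obtain ⟨g, hg, rfl⟩ := Finset.mem_image.1 hu
  rw [Finset.mem_filter] at hg
  have : (F.filter (fun g => cr g = cr w)).filter (fun a => z a ^ p = z g ^ p)
      = F.filter (fun a => z a ^ p = z g ^ p) := by
    ext a
    simp only [Finset.mem_filter]
    exact ⟨fun h => ⟨h.1.1, h.2⟩,
      fun h => ⟨⟨h.1, (hsep a h.1 g hg.1 h.2).trans hg.2⟩, h.2⟩⟩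
  rw [this]
  exact hfib _
end

section
/- Let p be a prime, F ⊆ ℤ² a cluster of cardinality p², and T an F-tiling. Then the orbit closure of the indicator configuration 1_T contains a point x for which there exist linearly independent vectors u, v ∈ ℤ² with x(w) − x(w − u) − x(w − v) + x(w − u − v) = 0 for all w ∈ ℤ² (i.e. a point annihilated by the Laurent polynomial (U^u − 1)(U^v − 1), hence of order at most 2). -/
/-!
The configuration `c = 1_T` itself is annihilated by some `(U^u - 1)(U^v - 1)`, so no passage to a
limit is needed. Write `f = ∑_{v ∈ F} U^v`; the tiling equation is `f c = 1`.

* Dilation (`dilation`): `f(U^n) c = 1` for all `n ≥ 1` coprime to `p`, by the Frobenius congruence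
  `f^q ≡ f(U^q)` modulo primes `q ≠ p`.
* Averaging these identities over `n = 1 + kp` shows that `c` is annihilated by a product of
  binomials `U^s - 1` with `s ≠ 0` (`exists_annihilator`). Fix such a product with as few factors
  as possible. Since a bounded configuration annihilated by `(U^t - 1)²` is annihilated by
  `U^t - 1` (`bdd_sq`), the directions in it are pairwise independent.
* Suppose there are at least two factors. Removing the factor `U^s - 1` and applying the others to
  `c` gives a bounded configuration `e` with period `s`, annihilated by `f(U^n)` for `n` coprime
  to `p`. With `D = |s|²`, the congruence `f(U^D) e ≡ 0` modulo `p` becomes a recurrence for `e`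
  transverse to `s`, whose coefficients are the numbers of points of `F` on the lines with
  direction `s`. If one of these numbers were prime to `p`, then `e` would be periodic modulo `p`,
  hence modulo all powers of `p`, hence doubly periodic (`doubly_periodic`), against minimality.
  So all lines in direction `s` meet `F` in a multiple of `p` points (`IsMinAnn.dvd_card`).
* A set of `p²` points has this property for at most two directions (`no_three_directions`).
  Thus a minimal product has at most two factors.
-/

noncomputable section

/-- The orbit closure of a configuration: the closure of its translation orbit in the
product topology (for a `{0,1}`-valued configuration this coincides with the closure in
`{0,1}^{ℤ²}` with `{0,1}` discrete). -/
def orbitClosure (c : ℤ × ℤ → ℂ) : Set (ℤ × ℤ → ℂ) :=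
  closure {y | ∃ g : ℤ × ℤ, y = shift g c}

namespace ClusterTiling

/-! ### Laurent polynomials acting on configurations -/

/-- Integer Laurent polynomials in two variables. -/
abbrev Laurent : Type := AddMonoidAlgebra ℤ (ℤ × ℤ)

/-- Integer-valued configurations on the grid. -/
abbrev Config : Type := ℤ × ℤ → ℤ

/-- The monomial `U^v`. -/
def mono (v : ℤ × ℤ) : Laurent := AddMonoidAlgebra.single v 1

/-- The action of Laurent polynomials on configurations in which `U^v` translates by `v`. -/
def act : Laurent →ₐ[ℤ] Module.End ℤ Config :=
  AddMonoidAlgebra.lift ℤ (Module.End ℤ Config) (ℤ × ℤ)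
    { toFun := fun v => LinearMap.funLeft ℤ ℤ (fun w => w - v.toAdd)
      map_one' := by
        ext c w
        simp [LinearMap.funLeft_apply]
      map_mul' := by
        intro a b
        ext c w
        simp [LinearMap.funLeft_apply, sub_sub] }

lemma act_mono (v : ℤ × ℤ) (c : Config) (w : ℤ × ℤ) : act (mono v) c w = c (w - v) := by
  simp [act, mono, LinearMap.funLeft_apply]

lemma mono_add (v w : ℤ × ℤ) : mono (v + w) = mono v * mono w := by
  simp [mono, AddMonoidAlgebra.single_mul_single]

lemma mono_zero : mono 0 = 1 := rfl

lemma mono_nsmul (n : ℕ) (v : ℤ × ℤ) : mono (n • v) = mono v ^ n := by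
  induction n with
  | zero => simp [mono_zero]
  | succ n ih => rw [succ_nsmul, mono_add, ih, pow_succ]

lemma act_mul (r s : Laurent) (c : Config) : act (r * s) c = act r (act s c) := by
  rw [map_mul]; rfl

lemma act_comm (r s : Laurent) (c : Config) : act r (act s c) = act s (act r c) := by
  rw [← act_mul, mul_comm, act_mul]

lemma act_add (r s : Laurent) (c : Config) : act (r + s) c = act r c + act s c := by
  rw [map_add]; rfl

lemma act_sub (r s : Laurent) (c : Config) : act (r - s) c = act r c - act s c := by
  rw [map_sub]; rfl

lemma act_one (c : Config) : act 1 c = c := by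
  rw [map_one]; rfl

lemma act_sum {ι : Type*} (S : Finset ι) (f : ι → Laurent) (c : Config) :
    act (∑ i ∈ S, f i) c = ∑ i ∈ S, act (f i) c := by
  rw [map_sum, LinearMap.sum_apply]

lemma act_natCast (n : ℕ) (c : Config) : act (n : Laurent) c = (n : ℤ) • c := by
  rw [map_natCast, Module.End.natCast_apply, natCast_zsmul]

lemma act_sub_one_eq_zero {r : Laurent} {c : Config} : act (r - 1) c = 0 ↔ act r c = c := by
  rw [act_sub, act_one, sub_eq_zero]

/-- A configuration with a common bound on the absolute values of its entries. -/
def Bdd (c : Config) : Prop := ∃ B : ℤ, ∀ w, |c w| ≤ B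

lemma Bdd.act {c : Config} (hc : Bdd c) (r : Laurent) : Bdd (act r c) := by
  induction r using AddMonoidAlgebra.induction_on with
  | of m =>
    obtain ⟨B, hB⟩ := hc
    refine ⟨B, fun w => ?_⟩
    have := act_mono m c w
    simp only [mono] at this
    simpa [this] using hB (w - m)
  | add x y hx hy =>
    obtain ⟨B, hB⟩ := hx
    obtain ⟨B', hB'⟩ := hy
    refine ⟨B + B', fun w => ?_⟩
    rw [act_add]
    exact (abs_add_le _ _).trans (add_le_add (hB w) (hB' w))
  | smul n x hx =>
    obtain ⟨B, hB⟩ := hx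
    refine ⟨|n| * B, fun w => ?_⟩
    rw [map_smul, LinearMap.smul_apply, Pi.smul_apply, smul_eq_mul, abs_mul]
    exact mul_le_mul_of_nonneg_left (hB w) (abs_nonneg _)

lemma eq_zero_of_mul_bounded (x B : ℤ) (h : ∀ K : ℕ, |(K : ℤ) * x| ≤ B) : x = 0 := by
  by_contra hx
  have h1 := h (B.toNat + 1)
  rw [abs_mul, abs_of_nonneg (by positivity)] at h1
  have h2 : 1 ≤ |x| := Int.one_le_abs hx
  have h3 := Int.self_le_toNat B
  push_cast at h1
  nlinarith

/-- For bounded configurations a squared factor `(U^t - 1)²` of an annihilator may be replaced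
by `U^t - 1`: along the direction `t` the configuration is a bounded arithmetic progression. -/
lemma bdd_sq {d : Config} (hd : Bdd d) (t : ℤ × ℤ)
    (h : act ((mono t - 1) * (mono t - 1)) d = 0) : act (mono t - 1) d = 0 := by
  obtain ⟨B, hB⟩ := hd
  have hper : act (mono t) (act (mono t - 1) d) = act (mono t - 1) d := by
    rw [act_mul] at h
    exact act_sub_one_eq_zero.1 h
  have hpow : ∀ i : ℕ, act (mono t ^ i) (act (mono t - 1) d) = act (mono t - 1) d := by
    intro i
    induction i with
    | zero => rw [pow_zero, act_one]
    | succ i ih => rw [pow_succ, act_mul, hper, ih]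
  funext w
  refine eq_zero_of_mul_bounded _ (B + B) fun K => ?_
  have h1 : act (mono (K • t) - 1) d = (K : ℤ) • act (mono t - 1) d := by
    rw [mono_nsmul, ← mul_geom_sum, mul_comm, act_mul, act_sum, Finset.sum_congr rfl
      (fun i _ => hpow i), Finset.sum_const, Finset.card_range, natCast_zsmul]
  have h2 := congrFun h1 w
  rw [act_sub, act_one, Pi.sub_apply, act_mono, Pi.smul_apply, smul_eq_mul] at h2
  rw [← h2]
  exact (abs_sub _ _).trans (add_le_add (hB _) (hB _))

/-! ### Dilations of the cluster -/

/-- The Laurent polynomial `∑_{v ∈ F} U^{nv}` of the cluster dilated by `n`. -/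
def dil (F : Finset (ℤ × ℤ)) (n : ℕ) : Laurent := ∑ v ∈ F, mono (n • v)

lemma sum_pow_prime {ι : Type*} (q : ℕ) (hq : q.Prime) (S : Finset ι) (f : ι → Laurent) :
    ∃ r : Laurent, (∑ i ∈ S, f i) ^ q = ∑ i ∈ S, f i ^ q + q * r := by
  classical
  induction S using Finset.induction_on with
  | empty => exact ⟨0, by simp [hq.ne_zero]⟩
  | insert a S ha ih =>
    obtain ⟨r, hr⟩ := ih
    obtain ⟨r', hr'⟩ := exists_add_pow_prime_eq hq (f a) (∑ i ∈ S, f i)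
    refine ⟨r + f a * (∑ i ∈ S, f i) * r', ?_⟩
    rw [Finset.sum_insert ha, Finset.sum_insert ha, hr', hr]
    ring

/-- The Frobenius congruence `f(U^n)^q ≡ f(U^{qn})` modulo a prime `q`. -/
lemma dil_pow_prime (F : Finset (ℤ × ℤ)) (q : ℕ) (hq : q.Prime) (n : ℕ) :
    ∃ r : Laurent, dil F n ^ q = dil F (q * n) + q * r := by
  obtain ⟨r, hr⟩ := sum_pow_prime q hq F (fun v => mono (n • v))
  refine ⟨r, ?_⟩
  rw [dil, hr, dil]
  congr 1
  refine Finset.sum_congr rfl fun v _ => ?_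
  rw [← mono_nsmul, smul_smul]

lemma act_dil (F : Finset (ℤ × ℤ)) (n : ℕ) (c : Config) (w : ℤ × ℤ) :
    act (dil F n) c w = ∑ v ∈ F, c (w - n • v) := by
  rw [dil, act_sum, Finset.sum_apply]
  exact Finset.sum_congr rfl fun v _ => act_mono _ _ _

lemma act_dil_const (F : Finset (ℤ × ℤ)) (n : ℕ) (a : ℤ) :
    act (dil F n) (fun _ => a) = fun _ => (F.card : ℤ) * a := by
  funext w
  simp [act_dil]

lemma act_dil_pow_const (F : Finset (ℤ × ℤ)) (n k : ℕ) :
    act (dil F n ^ k) (fun _ => 1) = fun _ => (F.card : ℤ) ^ k := by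
  induction k with
  | zero => simp
  | succ k ih => rw [pow_succ', act_mul, ih, act_dil_const, pow_succ']

lemma act_mono_sub_one_const (v : ℤ × ℤ) (a : ℤ) : act (mono v - 1) (fun _ => a) = 0 := by
  rw [act_sub_one_eq_zero]
  funext w
  rw [act_mono]

/-- The dilation lemma: a tiling by `F` is also a tiling by `nF` for every `n` coprime to the
size of `F`. For a prime `q`, the Frobenius congruence shows that `f(U^{qn})c ≡ 1` modulo `q`, so
`d = f(U^{qn})c - 1` is nonnegative; as `f d = 0` and `f` has nonnegative coefficients, `d = 0`. -/
lemma dilation {F : Finset (ℤ × ℤ)} (hF : F.Nonempty) {c : Config} (hc0 : ∀ w, 0 ≤ c w)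
    (hc : act (dil F 1) c = fun _ => 1) (n : ℕ) :
    Nat.Coprime F.card n → n ≠ 0 → act (dil F n) c = fun _ => 1 := by
  induction n using induction_on_primes with
  | zero => intro _ h; exact absurd rfl h
  | one => intro _ _; exact hc
  | prime_mul q n hq ih =>
    intro hcop hne
    have hn := ih (Nat.Coprime.coprime_mul_left_right hcop) (right_ne_zero_of_mul hne)
    have hcq : Nat.Coprime F.card q := Nat.Coprime.coprime_mul_right_right hcop
    obtain ⟨r, hr⟩ := dil_pow_prime F q hq n
    have hval : ∀ w, act (dil F (q * n)) c w = (F.card : ℤ) ^ (q - 1) - q * act r c w := by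
      intro w
      have h1 : act (dil F n ^ q) c = fun _ => (F.card : ℤ) ^ (q - 1) := by
        obtain ⟨k, rfl⟩ : ∃ k, q = k + 1 := ⟨q - 1, (Nat.succ_pred_prime hq).symm⟩
        rw [pow_succ, act_mul, hn, act_dil_pow_const, Nat.add_sub_cancel]
      rw [hr, act_add, act_mul, act_natCast] at h1
      have h2 := congrFun h1 w
      simp only [Pi.add_apply, Pi.smul_apply, smul_eq_mul] at h2
      linarith
    have hge : ∀ w, 1 ≤ act (dil F (q * n)) c w := by
      intro w
      have h0 : 0 ≤ act (dil F (q * n)) c w := by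
        rw [act_dil]
        exact Finset.sum_nonneg fun v _ => hc0 _
      have hmod : (F.card : ℤ) ^ (q - 1) ≡ 1 [ZMOD q] :=
        Int.ModEq.pow_card_sub_one_eq_one hq (Nat.isCoprime_iff_coprime.2 hcq)
      rcases h0.lt_or_eq with h | h
      · exact h
      · exfalso
        have hd : (q : ℤ) ∣ 1 - (F.card : ℤ) ^ (q - 1) := hmod.dvd
        have h3 : (q : ℤ) ∣ (F.card : ℤ) ^ (q - 1) := ⟨act r c w, by linarith [hval w]⟩
        have h4 : (q : ℤ) ∣ 1 := by simpa using dvd_add hd h3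
        exact hq.one_lt.ne' (by exact_mod_cast Int.eq_one_of_dvd_one (by positivity) h4)
    have hzero : act (dil F 1) (act (dil F (q * n)) c - fun _ => 1) = 0 := by
      rw [map_sub, act_comm, hc, act_dil_const, act_dil_const, sub_self]
    funext w
    obtain ⟨v, hv⟩ := hF
    have h5 := congrFun hzero (w + v)
    rw [act_dil, Pi.zero_apply, Finset.sum_eq_zero_iff_of_nonneg
      (fun u _ => by simpa using hge _)] at h5
    have h6 := h5 v hv
    simp only [one_smul, add_sub_cancel_right, Pi.sub_apply] at h6
    linarith

/-! ### An annihilator that is a product of binomials -/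

/-- The product of the binomials `U^s - 1`, `s ∈ S`. -/
def binProd (S : Multiset (ℤ × ℤ)) : Laurent := (S.map fun s => mono s - 1).prod

lemma binProd_cons (s : ℤ × ℤ) (S : Multiset (ℤ × ℤ)) :
    binProd (s ::ₘ S) = (mono s - 1) * binProd S := by
  simp [binProd]

/-- The dilation lemma for `n = 1 + kp` gives `c = 1 - ∑_{v ≠ v₀} U^{n(v - v₀)} c`. Summing over
`k < K` and multiplying by `∏ (U^{p(v - v₀)} - 1)` makes the right-hand side telescope, so that
`K` times the value of `∏ (U^{p(v - v₀)} - 1) c` stays bounded as `K` grows. -/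
lemma exists_annihilator (p : ℕ) (hp : p.Prime) (F : Finset (ℤ × ℤ)) (hcard : F.card = p ^ 2)
    {c : Config} (hb : Bdd c)
    (hdil : ∀ n : ℕ, Nat.Coprime p n → n ≠ 0 → act (dil F n) c = fun _ => 1) :
    ∃ S : Multiset (ℤ × ℤ), (∀ s ∈ S, s ≠ 0) ∧ act (binProd S) c = 0 := by
  classical
  have hlt : 1 < F.card := by
    rw [hcard]; exact Nat.one_lt_pow two_ne_zero hp.one_lt
  obtain ⟨v₀, hv₀, v₁, hv₁, hne⟩ := Finset.one_lt_card.1 hlt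
  have hv₁' : v₁ ∈ F.erase v₀ := Finset.mem_erase.2 ⟨hne.symm, hv₁⟩
  set E := F.erase v₀ with hE
  let δ : ℤ × ℤ → ℤ × ℤ := fun v => v - v₀
  have hP : binProd (E.val.map fun v => p • δ v) = ∏ v ∈ E, (mono (p • δ v) - 1) := by
    rw [binProd, Multiset.map_map]; rfl
  refine ⟨E.val.map fun v => p • δ v, ?_, ?_⟩
  · intro s hs
    obtain ⟨v, hv, rfl⟩ := Multiset.mem_map.1 hs
    have : v ≠ v₀ := (Finset.mem_erase.1 hv).1
    exact smul_ne_zero hp.ne_zero (sub_ne_zero.2 this)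
  rw [hP]
  set P := ∏ v ∈ E, (mono (p • δ v) - 1) with hPdef
  let Q : ℤ × ℤ → Laurent := fun v => ∏ u ∈ E.erase v, (mono (p • δ u) - 1)
  have hPQ : ∀ v ∈ E, P = Q v * (mono (p • δ v) - 1) := fun v hv =>
    (Finset.prod_erase_mul E _ hv).symm
  have hP1 : act P (fun _ => 1) = 0 := by
    rw [hPQ v₁ hv₁', act_mul, act_mono_sub_one_const, map_zero]
  have hstep : ∀ k : ℕ, act (P + ∑ v ∈ E, P * mono ((1 + k * p) • δ v)) c = 0 := by
    intro k
    have h1 := hdil (1 + k * p) (by simp) (by omega)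
    have h2 : P + ∑ v ∈ E, P * mono ((1 + k * p) • δ v)
        = mono (-((1 + k * p) • v₀)) * (P * dil F (1 + k * p)) := by
      rw [dil, ← Finset.add_sum_erase F _ hv₀, ← hE, mul_add, mul_add, Finset.mul_sum,
        Finset.mul_sum]
      congr 1
      · rw [mul_left_comm, ← mono_add, neg_add_cancel, mono_zero, mul_one]
      · refine Finset.sum_congr rfl fun v _ => ?_
        rw [mul_left_comm, ← mono_add]
        congr 2
        simp only [δ, smul_sub]
        abel
    rw [h2, act_mul, act_mul, h1, hP1, map_zero]
  have hsum : ∀ K : ℕ, act ((K : Laurent) * P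
      + ∑ v ∈ E, (mono (δ v) * (mono (K • p • δ v) - 1)) * Q v) c = 0 := by
    intro K
    have h3 : (K : Laurent) * P + ∑ v ∈ E, (mono (δ v) * (mono (K • p • δ v) - 1)) * Q v
        = ∑ k ∈ Finset.range K, (P + ∑ v ∈ E, P * mono ((1 + k * p) • δ v)) := by
      rw [Finset.sum_add_distrib, Finset.sum_const, Finset.card_range, nsmul_eq_mul,
        Finset.sum_comm]
      congr 1
      refine Finset.sum_congr rfl fun v hv => ?_
      rw [mono_nsmul K, ← mul_geom_sum, hPQ v hv, Finset.mul_sum, Finset.mul_sum, Finset.sum_mul]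
      refine Finset.sum_congr rfl fun k _ => ?_
      rw [add_smul, one_smul, mono_add, mul_smul, mono_nsmul k]
      ring
    rw [h3, act_sum]
    exact Finset.sum_eq_zero fun k _ => hstep k
  have hQb : ∀ v, ∃ B : ℤ, ∀ w, |act (Q v) c w| ≤ B := fun v => hb.act (Q v)
  choose B hB using hQb
  funext w
  refine eq_zero_of_mul_bounded _ (∑ v ∈ E, (B v + B v)) fun K => ?_
  have h4 := congrFun (hsum K) w
  rw [act_add, act_mul, act_natCast, Pi.add_apply, Pi.smul_apply, smul_eq_mul, Pi.zero_apply,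
    act_sum, Finset.sum_apply] at h4
  rw [eq_neg_of_add_eq_zero_left h4, abs_neg]
  refine (Finset.abs_sum_le_sum_abs _ _).trans (Finset.sum_le_sum fun v _ => ?_)
  rw [act_mul, act_mul, act_mono, act_sub, act_one, Pi.sub_apply, act_mono]
  exact (abs_sub _ _).trans (add_le_add (hB _ _) (hB _ _))

/-! ### Periodicity transverse to a known period -/

/-- The determinant of `s` and `w`; its level sets as a function of `w` are the lines with
direction `s`. -/
def det2 (s w : ℤ × ℤ) : ℤ := s.1 * w.2 - s.2 * w.1

/-- The vector `s` rotated by a right angle. -/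
def perp (s : ℤ × ℤ) : ℤ × ℤ := (-s.2, s.1)

/-- The squared Euclidean length of `s`. -/
def normSq (s : ℤ × ℤ) : ℕ := (s.1 ^ 2 + s.2 ^ 2).toNat

lemma normSq_cast (s : ℤ × ℤ) : (normSq s : ℤ) = s.1 ^ 2 + s.2 ^ 2 :=
  Int.toNat_of_nonneg (by positivity)

lemma normSq_ne_zero {s : ℤ × ℤ} (hs : s ≠ 0) : normSq s ≠ 0 := by
  intro h
  apply hs
  have h1 := normSq_cast s
  rw [h] at h1
  have h2 : s.1 = 0 := by push_cast at h1; nlinarith [sq_nonneg s.1, sq_nonneg s.2]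
  have h3 : s.2 = 0 := by push_cast at h1; nlinarith [sq_nonneg s.1, sq_nonneg s.2]
  exact Prod.ext h2 h3

lemma normSq_smul (s w : ℤ × ℤ) :
    normSq s • w = (s.1 * w.1 + s.2 * w.2) • s + det2 s w • perp s := by
  rw [← natCast_zsmul, normSq_cast]
  ext <;> simp [det2, perp] <;> ring

/-- Modulo `p`, a linear recurrence along the direction `t` with a coefficient prime to `p` forces
a period along `t`, because its characteristic polynomial divides some `X^k - X^i` over the finite
field. The period depends on the recurrence only. -/
lemma exists_period_mod (p : ℕ) (hp : p.Prime) (F : Finset (ℤ × ℤ)) (l : ℤ × ℤ → ℤ) (t : ℤ × ℤ)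
    (j : ℤ) (hj : ¬ p ∣ (F.filter fun v => l v = j).card) :
    ∃ M : ℕ, 0 < M ∧ ∀ h : Config, (∀ w, (p : ℤ) ∣ ∑ v ∈ F, h (w - l v • t)) →
      ∀ w, (p : ℤ) ∣ h (w - M • t) - h w := by
  classical
  have : Fact p.Prime := ⟨hp⟩
  -- Shifting all exponents by `C` makes them natural numbers.
  let C : ℤ := ∑ v ∈ F, |l v|
  have hC : ∀ v ∈ F, 0 ≤ l v + C := by
    intro v hv
    have h1 : |l v| ≤ C := Finset.single_le_sum (f := fun v => |l v|) (fun u _ => abs_nonneg _) hv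
    have h2 := neg_abs_le (l v)
    linarith
  let e : ℤ × ℤ → ℕ := fun v => (l v + C).toNat
  have he : ∀ v ∈ F, (e v : ℤ) = l v + C := fun v hv => Int.toNat_of_nonneg (hC v hv)
  let Q : Polynomial (ZMod p) := ∑ v ∈ F, Polynomial.X ^ e v
  have hQ : Q ≠ 0 := by
    intro hQ
    apply hj
    have hne : (F.filter fun v => l v = j).Nonempty := by
      rw [Finset.nonempty_iff_ne_empty]
      intro h
      exact hj (by simp [h])
    obtain ⟨v₀, hv₀⟩ := hne
    rw [Finset.mem_filter] at hv₀
    have h1 : Q.coeff (e v₀) = ((F.filter fun v => l v = j).card : ZMod p) := by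
      simp only [Q, Polynomial.finsetSum_coeff, Polynomial.coeff_X_pow, Finset.sum_boole]
      congr 2
      refine Finset.filter_congr fun v hv => ?_
      have h2 := he v hv
      have h3 := he v₀ hv₀.1
      omega
    rw [hQ, Polynomial.coeff_zero] at h1
    exact (ZMod.natCast_eq_zero_iff _ _).1 h1.symm
  have : Module.Finite (ZMod p) (AdjoinRoot Q) := (AdjoinRoot.powerBasis hQ).finite
  have : Finite (AdjoinRoot Q) := Module.finite_of_finite (ZMod p)
  obtain ⟨i, k, hik, hroot⟩ : ∃ i k : ℕ, i < k ∧ AdjoinRoot.root Q ^ k = AdjoinRoot.root Q ^ i := by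
    obtain ⟨a, b, hab, h⟩ :=
      Finite.exists_ne_map_eq_of_infinite (fun n : ℕ => AdjoinRoot.root Q ^ n)
    rcases lt_or_gt_of_ne hab with h' | h'
    · exact ⟨a, b, h', h.symm⟩
    · exact ⟨b, a, h', h⟩
  have hdvd : Q ∣ Polynomial.X ^ k - Polynomial.X ^ i := by
    rw [← AdjoinRoot.mk_eq_zero]
    simp [hroot]
  obtain ⟨R, hR⟩ := hdvd
  refine ⟨k - i, by omega, fun h hh => ?_⟩
  let Y : Module.End (ZMod p) (ℤ × ℤ → ZMod p) :=
    LinearMap.funLeft (ZMod p) (ZMod p) (fun w => w - t)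
  have hY : ∀ (n : ℕ) (g : ℤ × ℤ → ZMod p) (w : ℤ × ℤ), (Y ^ n) g w = g (w - n • t) := by
    intro n
    induction n with
    | zero => intro g w; simp
    | succ n ih =>
      intro g w
      rw [pow_succ, Module.End.mul_apply, ih]
      simp only [Y, LinearMap.funLeft_apply]
      congr 1
      rw [succ_nsmul, sub_sub]
  let hbar : ℤ × ℤ → ZMod p := fun w => (h w : ZMod p)
  have hQh : Polynomial.aeval Y Q hbar = 0 := by
    funext w
    simp only [Q, map_sum, map_pow, Polynomial.aeval_X, LinearMap.sum_apply, Finset.sum_apply, hY,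
      hbar, Pi.zero_apply]
    rw [← Int.cast_sum, ZMod.intCast_zmod_eq_zero_iff_dvd]
    have h1 := hh (w - C • t)
    have h2 : ∑ v ∈ F, h (w - e v • t) = ∑ v ∈ F, h (w - C • t - l v • t) := by
      refine Finset.sum_congr rfl fun v hv => ?_
      rw [← natCast_zsmul, he v hv, add_smul, sub_sub, add_comm]
    rw [h2]
    exact h1
  have hXX : (Y ^ k) hbar - (Y ^ i) hbar = 0 := by
    have h1 : Polynomial.aeval Y
        (Polynomial.X ^ k - Polynomial.X ^ i : Polynomial (ZMod p)) hbar = 0 := by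
      rw [hR, mul_comm Q, map_mul, Module.End.mul_apply, hQh, map_zero]
    simpa only [map_sub, map_pow, Polynomial.aeval_X, LinearMap.sub_apply] using h1
  intro w
  have h3 := congrFun hXX (w + i • t)
  rw [Pi.sub_apply, hY, hY, Pi.zero_apply, add_sub_cancel_right] at h3
  have h4 : w + i • t - k • t = w - (k - i) • t := by
    obtain ⟨m, rfl⟩ := Nat.exists_eq_add_of_lt hik
    have : i + m + 1 - i = m + 1 := by omega
    rw [this, add_assoc i, add_smul]
    abel
  rw [h4, ← Int.cast_sub, ZMod.intCast_zmod_eq_zero_iff_dvd] at h3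
  exact h3

lemma act_mono_zsmul {u : ℤ × ℤ} {e : Config} (hu : act (mono u) e = e) (z : ℤ) :
    act (mono (z • u)) e = e := by
  have hnat : ∀ (u : ℤ × ℤ), act (mono u) e = e → ∀ n : ℕ, act (mono (n • u)) e = e := by
    intro u hu n
    induction n with
    | zero => rw [zero_smul, mono_zero, act_one]
    | succ n ih => rw [succ_nsmul, mono_add, act_mul, hu, ih]
  have hinv : act (mono (-u)) e = e := by
    conv_lhs => rw [← hu]
    rw [← act_mul, ← mono_add, neg_add_cancel, mono_zero, act_one]
  obtain ⟨n, rfl | rfl⟩ := z.eq_nat_or_neg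
  · rw [natCast_zsmul]; exact hnat u hu n
  · rw [neg_smul, natCast_zsmul, ← smul_neg]; exact hnat (-u) hinv n

/-- A configuration with period `s` does not see the component of `D w` along `s`, where `D` is
the squared length of `s`. -/
lemma act_normSq_smul {s : ℤ × ℤ} {e : Config} (hs : act (mono s) e = e) (v : ℤ × ℤ) :
    act (mono (normSq s • v)) e = act (mono (det2 s v • perp s)) e := by
  rw [normSq_smul, add_comm, mono_add, act_mul, act_mono_zsmul hs]

lemma act_zsmul (r : Laurent) (a : ℤ) (c : Config) : act r (a • c) = a • act r c :=
  map_smul _ _ _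

lemma dil_prime_pow (F : Finset (ℤ × ℤ)) (p : ℕ) (hp : p.Prime) (n a : ℕ) {e : Config}
    (he : act (dil F n) e = 0) : ∀ w, (p : ℤ) ∣ act (dil F (p ^ a * n)) e w := by
  suffices h : ∃ r s : Laurent, dil F (p ^ a * n) = r * dil F n + p * s by
    obtain ⟨r, s, h⟩ := h
    intro w
    rw [h, act_add, act_mul, he, map_zero, zero_add, act_mul, act_natCast, Pi.smul_apply,
      smul_eq_mul]
    exact dvd_mul_right _ _
  induction a with
  | zero => exact ⟨1, 0, by simp⟩
  | succ a ih =>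
    obtain ⟨r, s, h⟩ := ih
    obtain ⟨r', h'⟩ := dil_pow_prime F p hp (p ^ a * n)
    obtain ⟨k, hk⟩ : ∃ k, p = k + 1 := ⟨p - 1, (Nat.succ_pred_prime hp).symm⟩
    refine ⟨r * dil F (p ^ a * n) ^ k, s * dil F (p ^ a * n) ^ k - r', ?_⟩
    have h1 : dil F (p ^ (a + 1) * n) = dil F (p ^ a * n) ^ p - p * r' := by
      rw [h', pow_succ', mul_assoc]; ring
    have h2 : dil F (p ^ a * n) ^ p = dil F (p ^ a * n) * dil F (p ^ a * n) ^ k := by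
      rw [← pow_succ', ← hk]
    have h3 : dil F (p ^ a * n) * dil F (p ^ a * n) ^ k
        = (r * dil F n + p * s) * dil F (p ^ a * n) ^ k := by rw [← h]
    rw [h1, h2, h3]
    ring

/-- A bounded configuration with period `s`, annihilated by all dilations of `F` prime to `p`, is
doubly periodic as soon as some line with direction `s` meets `F` in a number of points prime to
`p`. The dilation by the squared length of `s` is, modulo `p`, a recurrence along `perp s`; the
resulting period `M` modulo `p` lifts to the period `p^j M` modulo `p^j`, and boundedness
turns a congruence modulo a large power of `p` into an equality. -/
lemma doubly_periodic (p : ℕ) (hp : p.Prime) (F : Finset (ℤ × ℤ)) {s : ℤ × ℤ} (hs : s ≠ 0)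
    {e : Config} (hb : Bdd e) (hper : act (mono s) e = e)
    (hdil : ∀ n : ℕ, Nat.Coprime p n → n ≠ 0 → act (dil F n) e = 0)
    (j : ℤ) (hj : ¬ p ∣ (F.filter fun v => det2 s v = j).card) :
    ∃ N : ℕ, N ≠ 0 ∧ ∀ v, act (mono (N • v)) e = e := by
  obtain ⟨a, n, hn, hD⟩ := Nat.exists_eq_pow_mul_and_not_dvd (normSq_ne_zero hs) p hp.ne_one
  have hn0 : n ≠ 0 := fun h => hn (by simp [h])
  have hen : act (dil F n) e = 0 := hdil n ((Nat.Prime.coprime_iff_not_dvd hp).2 hn) hn0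
  obtain ⟨M, hM, hmod⟩ := exists_period_mod p hp F (det2 s) (perp s) j hj
  have key : ∀ h : Config, act (mono s) h = h → act (dil F n) h = 0 →
      ∀ w, (p : ℤ) ∣ h (w - M • perp s) - h w := by
    intro h h1 h2
    refine hmod h fun w => ?_
    have h3 := dil_prime_pow F p hp n a h2 w
    rw [← hD, dil, act_sum, Finset.sum_apply] at h3
    convert h3 using 2 with v hv
    rw [act_normSq_smul h1, act_mono]
  have keyi : ∀ h : Config, act (mono s) h = h → act (dil F n) h = 0 →
      ∀ (i : ℕ) (w), (p : ℤ) ∣ h (w - (i * M) • perp s) - h w := by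
    intro h h1 h2 i
    induction i with
    | zero => intro w; simp
    | succ i ih =>
      intro w
      have h3 := key h h1 h2 (w - (i * M) • perp s)
      have h4 := dvd_add h3 (ih w)
      rw [sub_sub w, ← add_smul] at h4
      rw [add_mul, one_mul]
      simpa using h4
  have hlift : ∀ k : ℕ, ∃ e' : Config,
      act (mono ((p ^ k * M) • perp s) - 1) e = ((p : ℤ) ^ k) • e' := by
    intro k
    induction k with
    | zero => exact ⟨_, by rw [pow_zero, pow_zero, one_smul ℤ]⟩
    | succ k ih =>
      obtain ⟨e', he'⟩ := ih
      have hpk : ((p : ℤ) ^ k) ≠ 0 := pow_ne_zero _ (by exact_mod_cast hp.ne_zero)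
      have e1 : act (mono s) e' = e' := by
        have : ((p : ℤ) ^ k) • act (mono s) e' = ((p : ℤ) ^ k) • e' := by
          rw [← act_zsmul, ← he', act_comm, hper]
        exact smul_right_injective _ hpk this
      have e2 : act (dil F n) e' = 0 := by
        have : ((p : ℤ) ^ k) • act (dil F n) e' = ((p : ℤ) ^ k) • (0 : Config) := by
          rw [← act_zsmul, ← he', act_comm, hen, map_zero, smul_zero]
        exact smul_right_injective _ hpk this
      have h5 : act (mono ((p ^ (k + 1) * M) • perp s) - 1) e
          = ((p : ℤ) ^ k) • ∑ i ∈ Finset.range p, act (mono ((i * (p ^ k * M)) • perp s)) e' := by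
        rw [pow_succ', mul_assoc, mul_smul, mono_nsmul p, ← mul_geom_sum, mul_comm, act_mul, he',
          act_zsmul, act_sum]
        congr 1
        refine Finset.sum_congr rfl fun i _ => ?_
        rw [← mono_nsmul, smul_smul]
      have h6 : ∀ w, (p : ℤ) ∣
          (∑ i ∈ Finset.range p, act (mono ((i * (p ^ k * M)) • perp s)) e') w := by
        intro w
        have h7 : (p : ℤ) ∣ ∑ i ∈ Finset.range p,
            (e' (w - ((i * p ^ k) * M) • perp s) - e' w) :=
          Finset.dvd_sum fun i _ => keyi e' e1 e2 _ w
        rw [Finset.sum_sub_distrib, Finset.sum_const, Finset.card_range, nsmul_eq_mul] at h7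
        have h8 := (dvd_sub_left (dvd_mul_right (p : ℤ) (e' w))).1 h7
        rw [Finset.sum_apply]
        simpa only [act_mono, mul_assoc] using h8
      choose e'' he'' using h6
      refine ⟨e'', ?_⟩
      rw [h5, pow_succ, mul_smul]
      congr 1
      funext w
      rw [he'' w]
      rfl
  obtain ⟨B, hB⟩ := hb
  obtain ⟨k, hk⟩ : ∃ k : ℕ, B + B < (p : ℤ) ^ k := by
    refine ⟨(B + B).toNat, ?_⟩
    have h1 : (B + B).toNat < p ^ (B + B).toNat := Nat.lt_pow_self hp.one_lt
    have h2 := Int.self_le_toNat (B + B)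
    have h3 : (((B + B).toNat : ℕ) : ℤ) < (p : ℤ) ^ (B + B).toNat := by exact_mod_cast h1
    linarith
  obtain ⟨e', he'⟩ := hlift k
  have hY : act (mono ((p ^ k * M) • perp s)) e = e := by
    rw [← act_sub_one_eq_zero]
    funext w
    have h1 : |act (mono ((p ^ k * M) • perp s) - 1) e w| ≤ B + B := by
      rw [act_sub, act_one, Pi.sub_apply, act_mono]
      exact (abs_sub _ _).trans (add_le_add (hB _) (hB _))
    refine Int.eq_zero_of_abs_lt_dvd (m := (p : ℤ) ^ k) ?_ (h1.trans_lt hk)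
    rw [he']
    exact dvd_mul_right _ _
  refine ⟨normSq s * (p ^ k * M), ?_, fun v => ?_⟩
  · exact mul_ne_zero (normSq_ne_zero hs) (mul_ne_zero (pow_ne_zero _ hp.ne_zero) hM.ne')
  · rw [mul_smul, act_normSq_smul hper]
    have : det2 s ((p ^ k * M) • v) • perp s = det2 s v • ((p ^ k * M) • perp s) := by
      ext <;> simp [det2] <;> ring
    rw [this, act_mono_zsmul hY]

/-! ### At most two directions -/

lemma card_image_mul_le (p : ℕ) (F : Finset (ℤ × ℤ)) (l : ℤ × ℤ → ℤ)
    (h : ∀ j, p ∣ (F.filter fun v => l v = j).card) : (F.image l).card * p ≤ F.card := by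
  rw [Finset.card_eq_sum_card_image l F, ← smul_eq_mul]
  refine Finset.card_nsmul_le_sum _ _ _ fun j hj => ?_
  obtain ⟨v, hv, rfl⟩ := Finset.mem_image.1 hj
  exact Nat.le_of_dvd (Finset.card_pos.2 ⟨v, Finset.mem_filter.2 ⟨hv, rfl⟩⟩) (h _)

/-- A set of `p²` points meets the lines of at most two directions in multiples of `p` points only:
two such directions force it to be a full `p × p` grid in the coordinates `det2 a`, `det2 b`, and
then the line of a third direction through a suitable corner contains no other point of the set. -/
lemma no_three_directions (p : ℕ) (hp : p.Prime) (F : Finset (ℤ × ℤ)) (hcard : F.card = p ^ 2)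
    (a b d : ℤ × ℤ) (hab : det2 a b ≠ 0) (hdb : det2 d b ≠ 0) (had : det2 a d ≠ 0)
    (ha : ∀ j, p ∣ (F.filter fun v => det2 a v = j).card)
    (hb : ∀ j, p ∣ (F.filter fun v => det2 b v = j).card)
    (hd : ∀ j, p ∣ (F.filter fun v => det2 d v = j).card) : False := by
  classical
  have hpos : 0 < p := hp.pos
  have hinj : ∀ v w : ℤ × ℤ, det2 a v = det2 a w → det2 b v = det2 b w → v = w := by
    intro v w h1 h2
    simp only [det2] at h1 h2 hab
    have e1 : (a.1 * b.2 - a.2 * b.1) * (v.1 - w.1) = 0 := by linear_combination b.1 * h1 - a.1 * h2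
    have e2 : (a.1 * b.2 - a.2 * b.1) * (v.2 - w.2) = 0 := by linear_combination b.2 * h1 - a.2 * h2
    have e1' := (mul_eq_zero.1 e1).resolve_left hab
    have e2' := (mul_eq_zero.1 e2).resolve_left hab
    exact Prod.ext (by linarith) (by linarith)
  have hA : (F.image (det2 a)).card ≤ p := by
    have := card_image_mul_le p F _ ha
    rw [hcard, pow_two] at this
    exact Nat.le_of_mul_le_mul_right this hpos
  have hB : (F.image (det2 b)).card ≤ p := by
    have := card_image_mul_le p F _ hb
    rw [hcard, pow_two] at this
    exact Nat.le_of_mul_le_mul_right this hpos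
  have hgrid : F.image (fun v => (det2 a v, det2 b v)) = F.image (det2 a) ×ˢ F.image (det2 b) := by
    refine Finset.eq_of_subset_of_card_le ?_ ?_
    · intro z hz
      obtain ⟨v, hv, rfl⟩ := Finset.mem_image.1 hz
      exact Finset.mem_product.2 ⟨Finset.mem_image_of_mem _ hv, Finset.mem_image_of_mem _ hv⟩
    · have hfinj : Function.Injective fun v => (det2 a v, det2 b v) := fun v w h =>
        hinj v w (congrArg Prod.fst h) (congrArg Prod.snd h)
      rw [Finset.card_product, Finset.card_image_of_injective F hfinj, hcard, pow_two]
      exact Nat.mul_le_mul hA hB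
  have hne : F.Nonempty := Finset.card_pos.1 (by rw [hcard]; positivity)
  obtain ⟨x, hx, hxmax⟩ :=
    Finset.exists_max_image (F.image (det2 a)) (fun x => det2 d b * x) (hne.image _)
  obtain ⟨y, hy, hymax⟩ :=
    Finset.exists_max_image (F.image (det2 b)) (fun y => det2 a d * y) (hne.image _)
  have hxy : (x, y) ∈ F.image (fun v => (det2 a v, det2 b v)) := by
    rw [hgrid]; exact Finset.mem_product.2 ⟨hx, hy⟩
  obtain ⟨v, hv, hvxy⟩ := Finset.mem_image.1 hxy
  obtain ⟨rfl, rfl⟩ := Prod.ext_iff.1 hvxy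
  have hlin : ∀ w, det2 a b * det2 d w = det2 d b * det2 a w + det2 a d * det2 b w := by
    intro w; simp only [det2]; ring
  have hfib : (F.filter fun w => det2 d w = det2 d v) = {v} := by
    ext w
    rw [Finset.mem_filter, Finset.mem_singleton]
    constructor
    · rintro ⟨hw, hwv⟩
      have h1 := hxmax _ (Finset.mem_image_of_mem (det2 a) hw)
      have h2 := hymax _ (Finset.mem_image_of_mem (det2 b) hw)
      have h3 := hlin w
      rw [hwv, hlin v] at h3
      simp only at h1 h2 h3
      refine hinj w v (mul_left_cancel₀ hdb ?_) (mul_left_cancel₀ had ?_) <;> linarith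
    · rintro rfl
      exact ⟨hv, rfl⟩
  have h4 := hd (det2 d v)
  rw [hfib, Finset.card_singleton] at h4
  exact hp.one_lt.ne' (Nat.dvd_one.1 h4)

/-- `S` has the least number of elements among the multisets of nonzero vectors whose product of
binomials annihilates `c`. -/
def IsMinAnn (c : Config) (S : Multiset (ℤ × ℤ)) : Prop :=
  (∀ s ∈ S, s ≠ 0) ∧ act (binProd S) c = 0 ∧
    ∀ S' : Multiset (ℤ × ℤ), (∀ s ∈ S', s ≠ 0) → act (binProd S') c = 0 →
      Multiset.card S ≤ Multiset.card S'

lemma exists_isMinAnn {c : Config}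
    (h : ∃ S : Multiset (ℤ × ℤ), (∀ s ∈ S, s ≠ 0) ∧ act (binProd S) c = 0) :
    ∃ S, IsMinAnn c S := by
  classical
  have hex : ∃ n : ℕ, ∃ S : Multiset (ℤ × ℤ), Multiset.card S = n ∧ (∀ s ∈ S, s ≠ 0) ∧
      act (binProd S) c = 0 := by
    obtain ⟨S, h1, h2⟩ := h
    exact ⟨_, S, rfl, h1, h2⟩
  obtain ⟨S, h1, h2, h3⟩ := Nat.find_spec hex
  refine ⟨S, h2, h3, fun S' h4 h5 => ?_⟩
  rw [h1]
  exact Nat.find_min' hex ⟨S', rfl, h4, h5⟩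

/-- In a minimal annihilator no factor `U^s - 1` can be traded for a multiple of another factor
`U^{s₁} - 1`, as the squared factor arising in this way could be reduced. -/
lemma IsMinAnn.not_periodic {c : Config} (hb : Bdd c) {s s₁ : ℤ × ℤ} {S : Multiset (ℤ × ℤ)}
    (hS : IsMinAnn c (s ::ₘ s₁ ::ₘ S)) (N : ℕ) (hN : N ≠ 0) :
    act (mono (N • s₁)) (act (binProd (s₁ ::ₘ S)) c) ≠ act (binProd (s₁ ::ₘ S)) c := by
  intro h
  obtain ⟨h1, -, h3⟩ := hS
  have hs₁ : s₁ ≠ 0 := h1 s₁ (by simp)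
  rw [← act_sub_one_eq_zero] at h
  have h4 : act ((mono (N • s₁) - 1) * (mono (N • s₁) - 1)) (act (binProd S) c) = 0 := by
    have h5 : (mono (N • s₁) - 1) * (mono (N • s₁) - 1) * binProd S
        = (∑ i ∈ Finset.range N, mono s₁ ^ i) * ((mono (N • s₁) - 1) * binProd (s₁ ::ₘ S)) := by
      rw [binProd_cons, mono_nsmul, ← mul_geom_sum]
      ring
    rw [← act_mul, h5, act_mul, act_mul, h, map_zero]
  have h6 := bdd_sq (hb.act _) _ h4
  rw [← act_mul, ← binProd_cons] at h6
  have h7 := h3 _ (by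
    intro u hu
    rcases Multiset.mem_cons.1 hu with rfl | hu
    · exact smul_ne_zero hN hs₁
    · exact h1 u (by simp [hu])) h6
  simp at h7

lemma IsMinAnn.act_head {c : Config} {s : ℤ × ℤ} {S : Multiset (ℤ × ℤ)}
    (hS : IsMinAnn c (s ::ₘ S)) : act (mono s) (act (binProd S) c) = act (binProd S) c := by
  rw [← act_sub_one_eq_zero, ← act_mul, ← binProd_cons]
  exact hS.2.1

lemma IsMinAnn.indep {c : Config} (hb : Bdd c) {s s₁ : ℤ × ℤ} {S : Multiset (ℤ × ℤ)}
    (hS : IsMinAnn c (s ::ₘ s₁ ::ₘ S)) : det2 s s₁ ≠ 0 := by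
  intro h
  refine hS.not_periodic hb (normSq s) (normSq_ne_zero (hS.1 s (by simp))) ?_
  rw [act_normSq_smul hS.act_head, h, zero_smul, mono_zero, act_one]

/-- If a minimal annihilator has at least two factors, then the lines in the direction of each
factor meet `F` in multiples of `p` points. -/
lemma IsMinAnn.dvd_card (p : ℕ) (hp : p.Prime) {F : Finset (ℤ × ℤ)} {c : Config} (hb : Bdd c)
    (hdil : ∀ n : ℕ, Nat.Coprime p n → n ≠ 0 → act (dil F n) c = fun _ => 1)
    {s s₁ : ℤ × ℤ} {S : Multiset (ℤ × ℤ)} (hS : IsMinAnn c (s ::ₘ s₁ ::ₘ S)) (j : ℤ) :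
    p ∣ (F.filter fun v => det2 s v = j).card := by
  by_contra hj
  obtain ⟨N, hN, h⟩ := doubly_periodic p hp F (hS.1 s (by simp))
    (hb.act (binProd (s₁ ::ₘ S))) hS.act_head (fun n hn hn0 => by
      rw [act_comm, hdil n hn hn0, binProd_cons, mul_comm, act_mul, act_mono_sub_one_const,
        map_zero]) j hj
  exact hS.not_periodic hb N hN (h s₁)

/-- A bounded configuration satisfying the tiling equations of all dilations of `F` prime to `p` is
annihilated by `(U^u - 1)(U^v - 1)` for some independent `u`, `v`. -/
lemma exists_two_periods (p : ℕ) (hp : p.Prime) {F : Finset (ℤ × ℤ)} (hcard : F.card = p ^ 2)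
    {c : Config} (hb : Bdd c)
    (hdil : ∀ n : ℕ, Nat.Coprime p n → n ≠ 0 → act (dil F n) c = fun _ => 1) :
    ∃ u v : ℤ × ℤ, det2 u v ≠ 0 ∧ act ((mono u - 1) * (mono v - 1)) c = 0 := by
  obtain ⟨S, hS⟩ := exists_isMinAnn (exists_annihilator p hp F hcard hb hdil)
  induction S using Multiset.induction with
  | empty =>
    refine ⟨(1, 0), (0, 1), by simp [det2], ?_⟩
    have h := hS.2.1
    rw [binProd, Multiset.map_zero, Multiset.prod_zero, act_one] at h
    rw [h, map_zero]
  | cons a S _ =>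
  induction S using Multiset.induction with
  | empty =>
    have ha : a ≠ 0 := hS.1 a (by simp)
    refine ⟨a, perp a, ?_, ?_⟩
    · have h1 : det2 a (perp a) = normSq a := by
        rw [normSq_cast]; simp only [det2, perp]; ring
      rw [h1]
      exact_mod_cast normSq_ne_zero ha
    · have h := hS.2.1
      rw [binProd, Multiset.map_cons, Multiset.map_zero, Multiset.prod_cons,
        Multiset.prod_zero, mul_one] at h
      rw [mul_comm, act_mul, h, map_zero]
  | cons b S _ =>
  induction S using Multiset.induction with
  | empty =>
    refine ⟨a, b, hS.indep hb, ?_⟩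
    have h := hS.2.1
    rwa [binProd, Multiset.map_cons, Multiset.map_cons, Multiset.map_zero, Multiset.prod_cons,
      Multiset.prod_cons, Multiset.prod_zero, mul_one] at h
  | cons d S _ =>
    exfalso
    have hba : IsMinAnn c (b ::ₘ a ::ₘ d ::ₘ S) := by rwa [Multiset.cons_swap]
    have hda : IsMinAnn c (d ::ₘ a ::ₘ b ::ₘ S) := by
      rwa [Multiset.cons_swap d a, Multiset.cons_swap d b]
    have had : IsMinAnn c (a ::ₘ d ::ₘ b ::ₘ S) := by rwa [Multiset.cons_swap d b]
    have hdb : IsMinAnn c (d ::ₘ b ::ₘ a ::ₘ S) := by rwa [Multiset.cons_swap b a]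
    exact no_three_directions p hp F hcard a b d (hS.indep hb) (hdb.indep hb) (had.indep hb)
      (hS.dvd_card p hp hb hdil) (hba.dvd_card p hp hb hdil) (hda.dvd_card p hp hb hdil)

lemma tiling_act {F : Finset (ℤ × ℤ)} {T : Set (ℤ × ℤ)} (hT : IsTiling F T) :
    act (dil F 1) (T.indicator fun _ => 1) = fun _ => 1 := by
  classical
  funext w
  obtain ⟨⟨t, v⟩, ⟨ht, hv, hw⟩, huniq⟩ := hT w
  simp only at ht hv hw
  rw [act_dil, Finset.sum_eq_single v]
  · rw [one_smul, hw, add_sub_cancel_right, Set.indicator_of_mem ht]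
  · intro u hu huv
    refine Set.indicator_of_notMem (fun hmem => huv ?_) _
    rw [one_smul] at hmem
    exact (Prod.ext_iff.1 (huniq (w - u, u) ⟨hmem, hu, by simp⟩)).2
  · exact fun h => absurd hv h

end ClusterTiling

/-- If `p` is prime, `F ⊆ ℤ²` is a cluster of cardinality `p²` and `T`
is an `F`-tiling, then the orbit closure of `1_T` contains a point annihilated by
`(U^u − 1)(U^v − 1)` for some linearly independent `u, v ∈ ℤ²` (hence of order at
most `2`). -/
theorem stmt14 (p : ℕ) (hp : p.Prime) (F : Finset (ℤ × ℤ)) (hF : F.Nonempty)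
    (hcard : F.card = p ^ 2) (T : Set (ℤ × ℤ)) (hT : IsTiling F T) :
    ∃ x ∈ orbitClosure (T.indicator fun _ => (1 : ℂ)),
      ∃ u v : ℤ × ℤ, LinIndep u v ∧
        ∀ w : ℤ × ℤ, x w - x (w - u) - x (w - v) + x (w - u - v) = 0 := by
  classical
  set c : ClusterTiling.Config := T.indicator fun _ => 1 with hc
  have hc01 : ∀ w, 0 ≤ c w ∧ c w ≤ 1 := by
    intro w
    rw [hc, Set.indicator_apply]
    split_ifs <;> simp
  have hb : ClusterTiling.Bdd c :=
    ⟨1, fun w => by rw [abs_of_nonneg (hc01 w).1]; exact (hc01 w).2⟩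
  obtain ⟨u, v, huv, h⟩ := ClusterTiling.exists_two_periods p hp hcard hb fun n hn hn0 =>
    ClusterTiling.dilation hF (fun w => (hc01 w).1) (ClusterTiling.tiling_act hT) n
      (by rw [hcard]; exact hn.pow_left 2) hn0
  refine ⟨_, subset_closure ⟨0, rfl⟩, u, v, huv, fun w => ?_⟩
  have hcast : ∀ z, shift 0 (T.indicator fun _ => (1 : ℂ)) z = (c z : ℂ) := by
    intro z
    rw [hc, shift, sub_zero, Set.indicator_apply, Set.indicator_apply]
    split_ifs <;> simp
  have h1 := congrFun h w
  simp only [ClusterTiling.act_mul, ClusterTiling.act_sub, ClusterTiling.act_one, Pi.sub_apply,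
    ClusterTiling.act_mono, Pi.zero_apply] at h1
  simp only [hcast]
  have h2 : c w - c (w - u) - c (w - v) + c (w - u - v) = 0 := by linarith
  exact_mod_cast h2
end
end
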